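/- arXiv:1404.4856 — 4 statements merged into one kernel-verified Lean document; each statement's English description precedes it below -/
import Mathlib

section
/- Let G = (V, V_∃, E, w, q_0) be a game graph and a ≤ b real numbers. Call a set U ⊆ V a trap for Adam if every Adam vertex in U has all of its successors in U and every Eve vertex in U has at least one successor in U; for such U let G|U be the induced subgame (vertices U, edges of E with both endpoints in U). Then Eve has a winning strategy in the interval mean-payoff game (G, [a, b]) (a strategy ensuring MP(π) ∈ [a, b] for every consistent play from q_0) if and only if there is a trap U for Adam with q_0 ∈ U such that in G|U, from every vertex of U, Eve has a strategy ensuring MP(π) ≥ a and Eve has a strategy ensuring MP(π) ≤ b. -/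
/-!
If Eve wins the interval game with `σ`, the vertices that `σ` allows to be reached form a trap for
Adam, and continuing `σ` from a history leading to such a vertex secures both bounds from it, since
the mean-payoff ignores finite prefixes.

Conversely, play inside the trap. Strategies that secure a bound from every vertex can be replaced
by one positional strategy `f` admitting, for every `ε > 0`, a potential `p` with
`p u - p s ≤ c s u + ε` on the edges compatible with `f`, where `c` is `w - a` or `b - w`. Indeed,
let `v` be the value of the discounted game with weights `c` and let the discount factor `lam` tend
to `1` along an ultrafilter: the optimal moves are eventually constant and `(1 - lam) * v`
converges to some `x`. When Adam plays his optimal moves, `x` never increases along a play, so from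
a vertex with `x < 0` he would keep the averages of `c` below a negative number from some time on.
Hence `x ≥ 0`, and `-v` is the potential for `lam` close to `1`. The argument only needs the
averages of `c` to be non-negative in the limit superior, which is all that `MP π ≤ b` says about
`b - w`.

Finally Eve switches: she plays the positional strategy for `b` while the average so far is at
least `a`, and the one for `a` otherwise. In either mode one bound holds for free and the potential
controls the other one, for every `ε` simultaneously as the strategy does not depend on `ε`.
-/

open Filter

/-- A game graph: vertex set `V`, Eve's vertices `Eve`, edge relation `E` (every vertex
has a successor), integer weight function `w`, and initial vertex `init`. -/
structure GameGraph (V : Type) where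
  Eve : Set V
  E : V → V → Prop
  w : V → V → ℤ
  init : V
  succ : ∀ v, ∃ u, E v u

namespace GameGraph

variable {V : Type}

/-- `π` is a play starting at vertex `v`. -/
def IsPlayFrom (G : GameGraph V) (v : V) (π : ℕ → V) : Prop :=
  π 0 = v ∧ ∀ i, G.E (π i) (π (i + 1))

/-- `π` is a play (from the initial vertex). -/
def IsPlay (G : GameGraph V) (π : ℕ → V) : Prop :=
  G.IsPlayFrom G.init π

/-- The prefix `π 0, …, π i` of a play, as a list. -/
def prefixList (π : ℕ → V) (i : ℕ) : List V :=
  List.ofFn (fun j : Fin (i + 1) => π j)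

/-- A (history-based) strategy for Eve is legal if it always proposes a successor
of the current (Eve) vertex. -/
def EveLegal (G : GameGraph V) (σ : List V → V) : Prop :=
  ∀ (l : List V) (v : V), v ∈ G.Eve → G.E v (σ (l ++ [v]))

/-- A (history-based) strategy for Adam is legal if it always proposes a successor
of the current (Adam) vertex. -/
def AdamLegal (G : GameGraph V) (σ : List V → V) : Prop :=
  ∀ (l : List V) (v : V), v ∉ G.Eve → G.E v (σ (l ++ [v]))

/-- The play `π` is consistent with Eve's strategy `σ`. -/
def ConsEve (G : GameGraph V) (σ : List V → V) (π : ℕ → V) : Prop :=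
  ∀ i, π i ∈ G.Eve → π (i + 1) = σ (prefixList π i)

/-- The play `π` is consistent with Adam's strategy `σ`. -/
def ConsAdam (G : GameGraph V) (σ : List V → V) (π : ℕ → V) : Prop :=
  ∀ i, π i ∉ G.Eve → π (i + 1) = σ (prefixList π i)

/-- Eve has a winning strategy for the objective `Win`. -/
def EveWins (G : GameGraph V) (Win : (ℕ → V) → Prop) : Prop :=
  ∃ σ : List V → V, G.EveLegal σ ∧ ∀ π, G.IsPlay π → G.ConsEve σ π → Win π

/-- Adam has a winning strategy: he can ensure the objective `Win` of Eve fails. -/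
def AdamWins (G : GameGraph V) (Win : (ℕ → V) → Prop) : Prop :=
  ∃ σ : List V → V, G.AdamLegal σ ∧ ∀ π, G.IsPlay π → G.ConsAdam σ π → ¬ Win π

/-- Consistency with a positional Eve strategy. -/
def ConsEvePos (G : GameGraph V) (f : V → V) (π : ℕ → V) : Prop :=
  ∀ i, π i ∈ G.Eve → π (i + 1) = f (π i)

/-- Consistency with a positional Adam strategy. -/
def ConsAdamPos (G : GameGraph V) (f : V → V) (π : ℕ → V) : Prop :=
  ∀ i, π i ∉ G.Eve → π (i + 1) = f (π i)

/-- Eve has a positional (memoryless) winning strategy. -/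
def EveWinsPos (G : GameGraph V) (Win : (ℕ → V) → Prop) : Prop :=
  ∃ f : V → V, (∀ v ∈ G.Eve, G.E v (f v)) ∧
    ∀ π, G.IsPlay π → G.ConsEvePos f π → Win π

/-- Adam has a positional (memoryless) winning strategy. -/
def AdamWinsPos (G : GameGraph V) (Win : (ℕ → V) → Prop) : Prop :=
  ∃ f : V → V, (∀ v, v ∉ G.Eve → G.E v (f v)) ∧
    ∀ π, G.IsPlay π → G.ConsAdamPos f π → ¬ Win π

/-- The run of the memory structure `(δ, m)` of a finite-state machine while
reading the play `π`: after `i` steps it has read `π 0, …, π (i-1)`. -/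
def memRun {M : Type} (δ : M → V → M) (m : M) (π : ℕ → V) : ℕ → M
  | 0 => m
  | i + 1 => δ (memRun δ m π i) (π i)

/-- Consistency of a play with the finite-memory strategy given by the machine
`(m0, δ, o)`: at step `i`, the machine has memory `memRun δ m0 π i` (having read
`π 0, …, π (i-1)`) and outputs the move `o (memRun δ m0 π i) (π i)`. -/
def ConsEveFM (G : GameGraph V) {M : Type} (m0 : M) (δ : M → V → M)
    (o : M → V → V) (π : ℕ → V) : Prop :=
  ∀ i, π i ∈ G.Eve → π (i + 1) = o (memRun δ m0 π i) (π i)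

/-- Eve has a finite-memory winning strategy, i.e. one computed by a
finite-state machine. -/
def EveWinsFM (G : GameGraph V) (Win : (ℕ → V) → Prop) : Prop :=
  ∃ (M : Type) (_ : Fintype M) (m0 : M) (δ : M → V → M) (o : M → V → V),
    (∀ m, ∀ v ∈ G.Eve, G.E v (o m v)) ∧
    ∀ π, G.IsPlay π → G.ConsEveFM m0 δ o π → Win π

/-- The total weight `w(π[..k])` of the length-`k` prefix of a play. -/
def partialSum (G : GameGraph V) (π : ℕ → V) (k : ℕ) : ℤ :=
  ∑ i ∈ Finset.range k, G.w (π i) (π (i + 1))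

/-- The (liminf) mean-payoff of a play. -/
noncomputable def MP (G : GameGraph V) (π : ℕ → V) : ℝ :=
  liminf (fun k => (G.partialSum π k : ℝ) / (k : ℝ)) atTop

/-- The liminf payoff of a play, in the extended reals. -/
noncomputable def liminfPayoff (G : GameGraph V) (π : ℕ → V) : EReal :=
  liminf (fun i => ((G.w (π i) (π (i + 1)) : ℝ) : EReal)) atTop

/-- The total-sum payoff of a play, in the extended reals. -/
noncomputable def totalPayoff (G : GameGraph V) (π : ℕ → V) : EReal :=
  liminf (fun k => ((G.partialSum π k : ℝ) : EReal)) atTop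

/-- The discounted sum of a play, with discount factor `lam`. -/
noncomputable def DS (G : GameGraph V) (lam : ℝ) (π : ℕ → V) : ℝ :=
  ∑' i : ℕ, lam ^ i * (G.w (π i) (π (i + 1)) : ℝ)

/-- A play of a (min-)parity game is winning for Eve iff the minimal priority
occurring infinitely often is even. -/
def ParityWin (Ω : V → ℕ) (π : ℕ → V) : Prop :=
  ∃ p, Even p ∧ (∀ N, ∃ k, N ≤ k ∧ Ω (π k) = p) ∧
    ∀ q, (∀ N, ∃ k, N ≤ k ∧ Ω (π k) = q) → p ≤ q

end GameGraph
/-- `U` is a trap for Adam: every Adam vertex of `U` has all of its successors in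
`U`, and every Eve vertex of `U` has at least one successor in `U`. -/
def GameGraph.Trap {V : Type} (G : GameGraph V) (U : Set V) : Prop :=
  (∀ v ∈ U, v ∉ G.Eve → ∀ u, G.E v u → u ∈ U) ∧
  ∀ v ∈ U, v ∈ G.Eve → ∃ u ∈ U, G.E v u

/-- The subgame induced by a trap `U` for Adam containing the initial vertex. -/
def GameGraph.restrict {V : Type} (G : GameGraph V) (U : Set V)
    (hU : G.Trap U) (h0 : G.init ∈ U) : GameGraph U where
  Eve := {v : U | (v : V) ∈ G.Eve}
  E x y := G.E x y
  w x y := G.w x y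
  init := ⟨G.init, h0⟩
  succ := by
    rintro ⟨v, hv⟩
    by_cases hE : v ∈ G.Eve
    · obtain ⟨u, hu, he⟩ := hU.2 v hv hE
      exact ⟨⟨u, hu⟩, he⟩
    · obtain ⟨u, he⟩ := G.succ v
      exact ⟨⟨u, hU.1 v hv hE u he⟩, he⟩

namespace GameGraph

variable {V : Type}

/-! ### Histories and strategies -/

lemma prefixList_eq_append (π : ℕ → V) (i : ℕ) :
    prefixList π i = List.ofFn (fun j : Fin i => π j) ++ [π i] :=
  List.ofFn_succ_last

lemma prefixList_succ (π : ℕ → V) (i : ℕ) :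
    prefixList π (i + 1) = prefixList π i ++ [π (i + 1)] :=
  prefixList_eq_append π (i + 1)

lemma prefixList_add (π : ℕ → V) (n j : ℕ) :
    prefixList π (n + j) =
      List.ofFn (fun i : Fin n => π i) ++ prefixList (fun i => π (n + i)) j :=
  List.ofFn_add (n := n) (m := j + 1)

lemma prefixList_congr {π ρ : ℕ → V} {i : ℕ} (h : ∀ j ≤ i, π j = ρ j) :
    prefixList π i = prefixList ρ i :=
  congrArg List.ofFn (funext fun j => h j (Nat.lt_succ_iff.1 j.2))

lemma map_prefixList {V' : Type} (g : V → V') (π : ℕ → V) (i : ℕ) :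
    (prefixList π i).map g = prefixList (fun j => g (π j)) i :=
  List.map_ofFn ..

lemma length_prefixList (π : ℕ → V) (i : ℕ) : (prefixList π i).length = i + 1 :=
  List.length_ofFn

lemma getD_prefixList (π : ℕ → V) {i j : ℕ} (h : j ≤ i) (d : V) :
    (prefixList π i).getD j d = π j := by
  rw [List.getD_eq_getElem _ _ (by rw [length_prefixList]; lia)]
  exact List.getElem_ofFn _

lemma getLastD_prefixList (π : ℕ → V) (i : ℕ) (d : V) : (prefixList π i).getLastD d = π i := by
  rw [prefixList_eq_append, List.getLastD_concat]

lemma exists_forall_succ_eq_prefixList (v : V) (τ : List V → V) :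
    ∃ π : ℕ → V, π 0 = v ∧ ∀ i, π (i + 1) = τ (prefixList π i) := by
  let hist (n : ℕ) : List V := (fun l => l ++ [τ l])^[n] [v]
  have hist_succ (n : ℕ) : hist (n + 1) = hist n ++ [τ (hist n)] :=
    Function.iterate_succ_apply' ..
  let π (n : ℕ) : V := (hist n).getLastD v
  have hπ (n : ℕ) : π (n + 1) = τ (hist n) := by
    simp only [π, hist_succ, List.getLastD_concat]
  have hprefix (n : ℕ) : prefixList π n = hist n := by
    induction n with
    | zero => rfl
    | succ n ih => rw [prefixList_succ, ih, hist_succ, hπ]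
  exact ⟨π, rfl, fun i => by rw [hprefix, hπ]⟩

lemma EveLegal.edge_prefixList {G : GameGraph V} {σ : List V → V} (hσ : G.EveLegal σ)
    {π : ℕ → V} {i : ℕ} (hi : π i ∈ G.Eve) : G.E (π i) (σ (prefixList π i)) := by
  rw [prefixList_eq_append]
  exact hσ _ _ hi

lemma exists_eveLegal_eq (G : GameGraph V) (τ : List V → V) :
    ∃ σ, G.EveLegal σ ∧ ∀ π i, G.E (π i) (τ (prefixList π i)) →
      σ (prefixList π i) = τ (prefixList π i) := by
  classical
  choose next hnext using G.succ
  let last (l : List V) : V := l.getLastD G.init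
  refine ⟨fun l => if G.E (last l) (τ l) then τ l else next (last l), fun l v _ => ?_,
    fun π i h => if_pos ?_⟩
  · simp only [last, List.getLastD_concat]
    split_ifs with h
    exacts [h, hnext v]
  · simpa only [last, getLastD_prefixList] using h

/-- The edges compatible with the positional strategy `f` of Eve. -/
def EveStep (G : GameGraph V) (f : V → V) (s u : V) : Prop :=
  G.E s u ∧ (s ∈ G.Eve → u = f s)

/-- The edges compatible with the positional strategy `f` of Adam. -/
def AdamStep (G : GameGraph V) (f : V → V) (s u : V) : Prop :=
  G.E s u ∧ (s ∉ G.Eve → u = f s)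

lemma EveLegal.exists_play_adamStep {G : GameGraph V} {σ : List V → V} (hσ : G.EveLegal σ)
    {f : V → V} (hf : ∀ s, G.E s (f s)) (v : V) :
    ∃ π, π 0 = v ∧ G.ConsEve σ π ∧ ∀ i, G.AdamStep f (π i) (π (i + 1)) := by
  classical
  obtain ⟨π, h0, hπ⟩ := exists_forall_succ_eq_prefixList v
    fun l => if l.getLastD v ∈ G.Eve then σ l else f (l.getLastD v)
  simp only [getLastD_prefixList] at hπ
  have heve : G.ConsEve σ π := fun i hi => by rw [hπ, if_pos hi]
  have hadam (i : ℕ) (hi : π i ∉ G.Eve) : π (i + 1) = f (π i) := by rw [hπ, if_neg hi]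
  refine ⟨π, h0, heve, fun i => ⟨?_, hadam i⟩⟩
  by_cases hi : π i ∈ G.Eve
  · exact heve i hi ▸ hσ.edge_prefixList hi
  · exact hadam i hi ▸ hf (π i)

/-! ### Sums of weights along a play -/

/-- The total weight of the first `k` steps of `π` for real edge weights `c`; it generalises
`GameGraph.partialSum` to weights such as `w - a` and `b - w`. -/
def pathSum (c : V → V → ℝ) (π : ℕ → V) (k : ℕ) : ℝ :=
  ∑ i ∈ Finset.range k, c (π i) (π (i + 1))

/-- The averages of `c` along `π` have a non-negative limit inferior. -/
def LiminfAvgNonneg (c : V → V → ℝ) (π : ℕ → V) : Prop :=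
  ∀ ε > 0, ∀ᶠ k : ℕ in atTop, -(ε * k) ≤ pathSum c π k

/-- The averages of `c` along `π` have a non-negative limit superior. -/
def LimsupAvgNonneg (c : V → V → ℝ) (π : ℕ → V) : Prop :=
  ∀ ε > 0, ∃ᶠ k : ℕ in atTop, -(ε * k) ≤ pathSum c π k

lemma LiminfAvgNonneg.limsupAvgNonneg {c : V → V → ℝ} {π : ℕ → V} (h : LiminfAvgNonneg c π) :
    LimsupAvgNonneg c π :=
  fun ε hε => (h ε hε).frequently

lemma eventually_lt_mul_natCast (C : ℝ) {ε : ℝ} (hε : 0 < ε) : ∀ᶠ k : ℕ in atTop, C < ε * k :=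
  (tendsto_natCast_atTop_atTop.const_mul_atTop hε).eventually_gt_atTop C

lemma liminfAvgNonneg_of_add_const {c : V → V → ℝ} {π : ℕ → V}
    (h : ∀ ε > 0, ∃ C, ∀ᶠ k : ℕ in atTop, -(ε * k) ≤ pathSum c π k + C) :
    LiminfAvgNonneg c π := by
  intro ε hε
  obtain ⟨C, hC⟩ := h (ε / 2) (half_pos hε)
  filter_upwards [hC, eventually_lt_mul_natCast C (half_pos hε)] with k hk hCk
  linarith

lemma pathSum_succ (c : V → V → ℝ) (π : ℕ → V) (k : ℕ) :
    pathSum c π (k + 1) = pathSum c π k + c (π k) (π (k + 1)) :=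
  Finset.sum_range_succ _ _

lemma pathSum_add (c : V → V → ℝ) (π : ℕ → V) (n k : ℕ) :
    pathSum c π (n + k) = pathSum c π n + pathSum c (fun i => π (n + i)) k :=
  Finset.sum_range_add _ _ _

lemma liminfAvgNonneg_shift_iff {c : V → V → ℝ} {π : ℕ → V} (n : ℕ) :
    LiminfAvgNonneg c (fun i => π (n + i)) ↔ LiminfAvgNonneg c π := by
  refine ⟨fun h => liminfAvgNonneg_of_add_const fun ε hε => ⟨-pathSum c π n, ?_⟩,
    fun h => liminfAvgNonneg_of_add_const fun ε hε => ⟨pathSum c π n + ε * n, ?_⟩⟩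
  · rw [← map_add_atTop_eq_nat n, eventually_map]
    filter_upwards [h ε hε] with k hk
    rw [add_comm k n, pathSum_add]
    push_cast
    linarith [mul_nonneg hε.le n.cast_nonneg]
  · filter_upwards [(tendsto_add_atTop_nat n).eventually (h ε hε)] with k hk
    rw [add_comm k n, pathSum_add] at hk
    push_cast at hk
    linarith

lemma abs_weight_le_norm [Fintype V] (c : V → V → ℝ) (s u : V) : |c s u| ≤ ‖c‖ :=
  (norm_le_pi_norm (c s) u).trans (norm_le_pi_norm c s)

/-! ### The mean-payoff of a play -/

lemma pathSum_weight_sub (G : GameGraph V) (a : ℝ) (π : ℕ → V) (k : ℕ) :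
    pathSum (fun s u => G.w s u - a) π k = G.partialSum π k - a * k := by
  simp [pathSum, partialSum, mul_comm]

lemma pathSum_sub_weight (G : GameGraph V) (b : ℝ) (π : ℕ → V) (k : ℕ) :
    pathSum (fun s u => b - G.w s u) π k = b * k - G.partialSum π k := by
  simp [pathSum, partialSum, mul_comm]

lemma exists_abs_partialSum_div_le [Finite V] (G : GameGraph V) (π : ℕ → V) :
    ∃ W : ℝ, ∀ k : ℕ, |(G.partialSum π k : ℝ) / k| ≤ W := by
  have := Fintype.ofFinite V
  let c (s u : V) : ℝ := G.w s u
  refine ⟨‖c‖, fun k => ?_⟩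
  rw [abs_div, Nat.abs_cast]
  refine div_le_of_le_mul₀ k.cast_nonneg (norm_nonneg c) ?_
  calc |(G.partialSum π k : ℝ)| = |∑ i ∈ Finset.range k, c (π i) (π (i + 1))| := by
        rw [partialSum, Int.cast_sum]
    _ ≤ ∑ i ∈ Finset.range k, |c (π i) (π (i + 1))| := Finset.abs_sum_le_sum_abs _ _
    _ ≤ ∑ _i ∈ Finset.range k, ‖c‖ := Finset.sum_le_sum fun i _ => abs_weight_le_norm c _ _
    _ = ‖c‖ * k := by rw [Finset.sum_const, Finset.card_range, nsmul_eq_mul, mul_comm]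

lemma isBoundedUnder_ge_avg [Finite V] (G : GameGraph V) (π : ℕ → V) :
    IsBoundedUnder (· ≥ ·) atTop fun k : ℕ => (G.partialSum π k : ℝ) / k :=
  let ⟨W, hW⟩ := G.exists_abs_partialSum_div_le π
  isBoundedUnder_of ⟨-W, fun k => (abs_le.1 (hW k)).1⟩

lemma isCoboundedUnder_ge_avg [Finite V] (G : GameGraph V) (π : ℕ → V) :
    IsCoboundedUnder (· ≥ ·) atTop fun k : ℕ => (G.partialSum π k : ℝ) / k :=
  let ⟨W, hW⟩ := G.exists_abs_partialSum_div_le π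
  (isBoundedUnder_of (r := (· ≤ ·)) ⟨W, fun k => (abs_le.1 (hW k)).2⟩).isCoboundedUnder_ge

lemma le_MP_iff [Finite V] (G : GameGraph V) (π : ℕ → V) (a : ℝ) :
    a ≤ G.MP π ↔ LiminfAvgNonneg (fun s u => G.w s u - a) π := by
  rw [MP, le_liminf_iff' (G.isCoboundedUnder_ge_avg π) (G.isBoundedUnder_ge_avg π)]
  simp only [LiminfAvgNonneg, pathSum_weight_sub]
  constructor
  · intro h ε hε
    filter_upwards [h (a - ε) (sub_lt_self a hε), eventually_gt_atTop 0] with k hk hk0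
    linarith [(le_div_iff₀ (Nat.cast_pos.2 hk0)).1 hk]
  · intro h y hy
    filter_upwards [h (a - y) (sub_pos.2 hy), eventually_gt_atTop 0] with k hk hk0
    rw [le_div_iff₀ (Nat.cast_pos.2 hk0)]
    linarith

lemma MP_le_iff [Finite V] (G : GameGraph V) (π : ℕ → V) (b : ℝ) :
    G.MP π ≤ b ↔ LimsupAvgNonneg (fun s u => b - G.w s u) π := by
  rw [MP, liminf_le_iff' (G.isCoboundedUnder_ge_avg π) (G.isBoundedUnder_ge_avg π)]
  simp only [LimsupAvgNonneg, pathSum_sub_weight]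
  constructor
  · intro h ε hε
    refine ((h (b + ε) (lt_add_of_pos_right b hε)).and_eventually
      (eventually_gt_atTop 0)).mono fun k hk => ?_
    linarith [(div_le_iff₀ (Nat.cast_pos.2 hk.2)).1 hk.1]
  · intro h y hy
    refine ((h (y - b) (sub_pos.2 hy)).and_eventually
      (eventually_gt_atTop 0)).mono fun k hk => ?_
    rw [div_le_iff₀ (Nat.cast_pos.2 hk.2)]
    linarith [hk.1]

lemma MP_shift [Finite V] (G : GameGraph V) (π : ℕ → V) (n : ℕ) :
    G.MP (fun i => π (n + i)) = G.MP π :=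
  eq_of_forall_le_iff fun a => by rw [le_MP_iff, le_MP_iff, liminfAvgNonneg_shift_iff]

/-! ### Discounted games and their limit -/

/-- A value `v` of the game with weights `c` discounted by `lam`, in which Eve maximises, together
with a choice `h` of optimal moves. As a vertex has only one owner, `h` records the positional
strategies of both players. -/
structure IsDiscountedSolution (G : GameGraph V) (c : V → V → ℝ) (lam : ℝ) (v : V → ℝ)
    (h : V → V) : Prop where
  edge : ∀ s, G.E s (h s)
  le_of_eveStep : ∀ {s u}, G.EveStep h s u → v s ≤ c s u + lam * v u
  le_of_adamStep : ∀ {s u}, G.AdamStep h s u → c s u + lam * v u ≤ v s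

lemma IsDiscountedSolution.eq_apply {G : GameGraph V} {c : V → V → ℝ} {lam : ℝ} {v : V → ℝ}
    {h : V → V} (hv : G.IsDiscountedSolution c lam v h) (s : V) :
    v s = c s (h s) + lam * v (h s) :=
  le_antisymm (hv.le_of_eveStep ⟨hv.edge s, fun _ => rfl⟩)
    (hv.le_of_adamStep ⟨hv.edge s, fun _ => rfl⟩)

lemma IsDiscountedSolution.norm_smul_le [Fintype V] {G : GameGraph V} {c : V → V → ℝ} {lam : ℝ}
    {v : V → ℝ} {h : V → V} (hv : G.IsDiscountedSolution c lam v h)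
    (hlam : lam ∈ Set.Ico (0 : ℝ) 1) : ‖(1 - lam) • v‖ ≤ ‖c‖ := by
  have hnorm : ‖v‖ ≤ ‖c‖ + lam * ‖v‖ := by
    have := hlam.1
    refine (pi_norm_le_iff_of_nonneg (by positivity)).2 fun s => ?_
    calc ‖v s‖ = ‖c s (h s) + lam * v (h s)‖ := by rw [← hv.eq_apply s]
      _ ≤ ‖c s (h s)‖ + ‖lam * v (h s)‖ := norm_add_le _ _
      _ = ‖c s (h s)‖ + lam * ‖v (h s)‖ := by rw [norm_mul, Real.norm_of_nonneg hlam.1]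
      _ ≤ ‖c‖ + lam * ‖v‖ := by
        gcongr
        exacts [abs_weight_le_norm c _ _, norm_le_pi_norm v _]
  rw [norm_smul, Real.norm_of_nonneg (sub_nonneg.2 hlam.2.le)]
  linarith

lemma IsDiscountedSolution.pathSum_le {G : GameGraph V} {c : V → V → ℝ} {lam M : ℝ} {v : V → ℝ}
    {h : V → V} (hv : G.IsDiscountedSolution c lam v h) {π : ℕ → V}
    (hπ : ∀ i, G.AdamStep h (π i) (π (i + 1))) (hM : ∀ i, (1 - lam) * v (π i) ≤ M) (k : ℕ) :
    pathSum c π k ≤ v (π 0) - v (π k) + M * k := by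
  induction k with
  | zero => simp [pathSum]
  | succ k ih =>
    rw [pathSum_succ]
    push_cast
    linarith [hv.le_of_adamStep (hπ k), hM (k + 1)]

instance (G : GameGraph V) (s : V) : Nonempty {u // G.E s u} :=
  nonempty_subtype.2 (G.succ s)

open Classical in
/-- The one-step operator of the game with weights `c` discounted by `lam`, in which Eve
maximises; its fixed point is the value of the game. -/
noncomputable def shapley (G : GameGraph V) (c : V → V → ℝ) (lam : ℝ) (x : V → ℝ) (s : V) : ℝ :=
  if s ∈ G.Eve then ⨆ u : {u // G.E s u}, (c s u + lam * x u)
  else ⨅ u : {u // G.E s u}, (c s u + lam * x u)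

section Shapley

variable [Finite V] (G : GameGraph V) (c : V → V → ℝ) (lam : ℝ) (x : V → ℝ)

lemma le_shapley {s u : V} (hs : s ∈ G.Eve) (hu : G.E s u) :
    c s u + lam * x u ≤ G.shapley c lam x s := by
  rw [shapley, if_pos hs]
  exact le_ciSup (f := fun u : {u // G.E s u} => c s u + lam * x u)
    (Set.finite_range _).bddAbove ⟨u, hu⟩

lemma shapley_le {s u : V} (hs : s ∉ G.Eve) (hu : G.E s u) :
    G.shapley c lam x s ≤ c s u + lam * x u := by
  rw [shapley, if_neg hs]
  exact ciInf_le (f := fun u : {u // G.E s u} => c s u + lam * x u)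
    (Set.finite_range _).bddBelow ⟨u, hu⟩

lemma exists_shapley_eq (s : V) : ∃ u, G.E s u ∧ G.shapley c lam x s = c s u + lam * x u := by
  unfold shapley
  split_ifs
  · obtain ⟨⟨u, hu⟩, h⟩ := exists_eq_ciSup_of_finite
      (f := fun u : {u // G.E s u} => c s u + lam * x u)
    exact ⟨u, hu, h.symm⟩
  · obtain ⟨⟨u, hu⟩, h⟩ := exists_eq_ciInf_of_finite
      (f := fun u : {u // G.E s u} => c s u + lam * x u)
    exact ⟨u, hu, h.symm⟩

end Shapley

lemma shapley_le_add_dist [Fintype V] (G : GameGraph V) (c : V → V → ℝ) {lam : ℝ}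
    (hlam : 0 ≤ lam) (x y : V → ℝ) (s : V) :
    G.shapley c lam x s ≤ G.shapley c lam y s + lam * dist x y := by
  have hmove (u : V) : c s u + lam * x u ≤ c s u + lam * y u + lam * dist x y := by
    have : x u - y u ≤ dist x y := (le_abs_self _).trans (dist_le_pi_dist x y u)
    linarith [mul_le_mul_of_nonneg_left this hlam]
  by_cases hs : s ∈ G.Eve
  · obtain ⟨u, hu, hxu⟩ := G.exists_shapley_eq c lam x s
    linarith [hmove u, G.le_shapley c lam y hs hu]
  · obtain ⟨u, hu, hyu⟩ := G.exists_shapley_eq c lam y s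
    linarith [hmove u, G.shapley_le c lam x hs hu]

lemma contractingWith_shapley [Fintype V] (G : GameGraph V) (c : V → V → ℝ) {lam : ℝ}
    (hlam : lam ∈ Set.Ico (0 : ℝ) 1) : ContractingWith ⟨lam, hlam.1⟩ (G.shapley c lam) := by
  refine ⟨hlam.2, LipschitzWith.of_dist_le_mul fun x y => ?_⟩
  refine (dist_pi_le_iff (mul_nonneg hlam.1 dist_nonneg)).2 fun s => ?_
  rw [Real.dist_eq, abs_sub_le_iff, sub_le_iff_le_add', sub_le_iff_le_add']
  exact ⟨G.shapley_le_add_dist c hlam.1 x y s,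
    dist_comm y x ▸ G.shapley_le_add_dist c hlam.1 y x s⟩

lemma exists_isDiscountedSolution [Finite V] (G : GameGraph V) (c : V → V → ℝ) {lam : ℝ}
    (hlam : lam ∈ Set.Ico (0 : ℝ) 1) : ∃ v h, G.IsDiscountedSolution c lam v h := by
  have := Fintype.ofFinite V
  obtain ⟨v, hv⟩ : ∃ v, G.shapley c lam v = v :=
    ⟨_, (G.contractingWith_shapley c hlam).fixedPoint_isFixedPt⟩
  choose h hE hopt using G.exists_shapley_eq c lam v
  rw [hv] at hopt
  refine ⟨v, h, hE, fun {s u} hu => ?_, fun {s u} hu => ?_⟩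
  · by_cases hs : s ∈ G.Eve
    · rw [hu.2 hs, ← hopt]
    · exact (congrFun hv s).symm.trans_le (G.shapley_le c lam v hs hu.1)
  · by_cases hs : s ∈ G.Eve
    · exact (G.le_shapley c lam v hs hu.1).trans_eq (congrFun hv s)
    · rw [hu.2 hs, ← hopt]

/-- A limit of discounted solutions as the discount factor tends to `1` along the filter `F`: the
optimal moves `h` do not depend on the discount factor, and the normalised values `(1 - lam) • v`
tend to `x`. -/
structure IsLimitSolution (G : GameGraph V) (c : V → V → ℝ) (F : Filter ℝ) (v : ℝ → V → ℝ)
    (h : V → V) (x : V → ℝ) : Prop where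
  le_nhds : F ≤ nhds 1
  eventually_lt : ∀ᶠ lam in F, lam < 1
  eventually_sol : ∀ᶠ lam in F, G.IsDiscountedSolution c lam (v lam) h
  tendsto : Tendsto (fun lam => (1 - lam) • v lam) F (nhds x)

lemma exists_isLimitSolution [Finite V] (G : GameGraph V) (c : V → V → ℝ) :
    ∃ (F : Ultrafilter ℝ) (v : ℝ → V → ℝ) (h : V → V) (x : V → ℝ),
      G.IsLimitSolution c F v h x := by
  have := Fintype.ofFinite V
  have : Nonempty V := ⟨G.init⟩
  choose! v h hsol using fun lam (hlam : lam ∈ Set.Ico (0 : ℝ) 1) =>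
    G.exists_isDiscountedSolution c hlam
  obtain ⟨F, hF⟩ := Ultrafilter.exists_le (nhdsWithin (1 : ℝ) (Set.Iio 1))
  have hIco : ∀ᶠ lam in (F : Filter ℝ), lam ∈ Set.Ico (0 : ℝ) 1 :=
    hF (Ico_mem_nhdsLT zero_lt_one)
  obtain ⟨h', hh'⟩ : ∃ h', ∀ᶠ lam in (F : Filter ℝ), h lam = h' :=
    Ultrafilter.eventually_exists_iff.1 (Eventually.of_forall fun lam => ⟨h lam, rfl⟩)
  obtain ⟨x, -, hx⟩ := (isCompact_closedBall (0 : V → ℝ) ‖c‖).ultrafilter_le_nhds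
    (F.map fun lam => (1 - lam) • v lam) <| le_principal_iff.2 <| hIco.mono fun lam hlam =>
      mem_closedBall_zero_iff.2 ((hsol lam hlam).norm_smul_le hlam)
  refine ⟨F, v, h', x, hF.trans nhdsWithin_le_nhds, hIco.mono fun _ => And.right, ?_, hx⟩
  filter_upwards [hIco, hh'] with lam hlam hh
  exact hh ▸ hsol lam hlam

namespace IsLimitSolution

variable {G : GameGraph V} {c : V → V → ℝ} {F : Filter ℝ} {v : ℝ → V → ℝ} {h : V → V}
  {x : V → ℝ}

lemma tendsto_apply (hx : G.IsLimitSolution c F v h x) (s : V) :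
    Tendsto (fun lam => (1 - lam) * v lam s) F (nhds (x s)) :=
  tendsto_pi_nhds.1 hx.tendsto s

lemma le_of_adamStep [F.NeBot] (hx : G.IsLimitSolution c F v h x) {s u : V}
    (hu : G.AdamStep h s u) : x u ≤ x s := by
  have hlam : Tendsto (fun lam : ℝ => lam) F (nhds 1) := hx.le_nhds
  have hlim : Tendsto (fun lam => (1 - lam) * c s u + lam * ((1 - lam) * v lam u)) F
      (nhds ((1 - 1) * c s u + 1 * x u)) :=
    ((hlam.const_sub 1).mul_const _).add (hlam.mul (hx.tendsto_apply u))
  rw [sub_self, zero_mul, zero_add, one_mul] at hlim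
  refine le_of_tendsto_of_tendsto hlim (hx.tendsto_apply s) ?_
  filter_upwards [hx.eventually_lt, hx.eventually_sol] with lam hlt hsol
  linarith [mul_le_mul_of_nonneg_left (hsol.le_of_adamStep hu) (sub_nonneg.2 hlt.le)]

lemma exists_abs_sub_lt [Finite V] [F.NeBot] (hx : G.IsLimitSolution c F v h x) {δ : ℝ}
    (hδ : 0 < δ) :
    ∃ lam, G.IsDiscountedSolution c lam (v lam) h ∧ ∀ s, |(1 - lam) * v lam s - x s| < δ := by
  have hclose : ∀ᶠ lam in F, ∀ s, |(1 - lam) * v lam s - x s| < δ :=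
    eventually_all.2 fun s => Metric.tendsto_nhds.1 (hx.tendsto_apply s) δ hδ
  exact (hx.eventually_sol.and hclose).exists

lemma nonneg_of_limsupAvgNonneg [Finite V] [F.NeBot] (hx : G.IsLimitSolution c F v h x)
    {π : ℕ → V} (hπ : ∀ i, G.AdamStep h (π i) (π (i + 1))) (hlim : LimsupAvgNonneg c π) :
    0 ≤ x (π 0) := by
  have := Fintype.ofFinite V
  by_contra! hneg
  obtain ⟨lam, hsol, hclose⟩ := hx.exists_abs_sub_lt (δ := -x (π 0) / 2) (by linarith)
  have hanti (i : ℕ) : x (π i) ≤ x (π 0) :=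
    antitone_nat_of_succ_le (f := fun i => x (π i)) (fun i => hx.le_of_adamStep (hπ i)) i.zero_le
  have hsum (k : ℕ) : pathSum c π k ≤ v lam (π 0) - v lam (π k) + x (π 0) / 2 * k :=
    hsol.pathSum_le hπ (fun i => by linarith [(abs_lt.1 (hclose (π i))).2, hanti i]) k
  have hpos : 0 < -x (π 0) / 4 := by linarith
  obtain ⟨k, hk, hlarge⟩ := ((hlim _ hpos).and_eventually
    (eventually_lt_mul_natCast (2 * ‖v lam‖) hpos)).exists
  have hv (s : V) : |v lam s| ≤ ‖v lam‖ := norm_le_pi_norm (v lam) s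
  linarith [hsum k, (abs_le.1 (hv (π 0))).2, (abs_le.1 (hv (π k))).1]

end IsLimitSolution

/-! ### Positional strategies with potentials -/

/-- The positional strategy `f` of Eve admits, for every slack `ε > 0`, a potential `p` that
bounds the weights `c` from below along the steps compatible with `f`. On a finite graph this
certifies that `f` keeps the averages of `c` asymptotically non-negative. -/
def HasPotentials (G : GameGraph V) (f : V → V) (c : V → V → ℝ) : Prop :=
  ∀ ε > 0, ∃ p : V → ℝ, ∀ s u, G.EveStep f s u → p u - p s ≤ c s u + ε

lemma IsLimitSolution.hasPotentials [Finite V] {G : GameGraph V} {c : V → V → ℝ} {F : Filter ℝ}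
    [F.NeBot] {v : ℝ → V → ℝ} {h : V → V} {x : V → ℝ} (hx : G.IsLimitSolution c F v h x)
    (hnonneg : ∀ s, 0 ≤ x s) : G.HasPotentials h c := by
  intro ε hε
  obtain ⟨lam, hsol, hclose⟩ := hx.exists_abs_sub_lt hε
  refine ⟨fun s => -v lam s, fun s u hu => ?_⟩
  linarith [hsol.le_of_eveStep hu, (abs_lt.1 (hclose u)).1, hnonneg u]

lemma exists_hasPotentials [Finite V] (G : GameGraph V) (c : V → V → ℝ)
    (hwin : ∀ v, ∃ σ, G.EveLegal σ ∧
      ∀ π, G.IsPlayFrom v π → G.ConsEve σ π → LimsupAvgNonneg c π) :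
    ∃ f, (∀ s, G.E s (f s)) ∧ G.HasPotentials f c := by
  obtain ⟨F, v, h, x, hx⟩ := G.exists_isLimitSolution c
  have hE : ∀ s, G.E s (h s) := hx.eventually_sol.exists.choose_spec.edge
  refine ⟨h, hE, hx.hasPotentials fun s => ?_⟩
  obtain ⟨σ, hσ, hσwin⟩ := hwin s
  obtain ⟨π, rfl, hcons, hstep⟩ := hσ.exists_play_adamStep hE s
  exact hx.nonneg_of_limsupAvgNonneg hstep (hσwin π ⟨rfl, fun i => (hstep i).1⟩ hcons)

lemma HasPotentials.liminfAvgNonneg [Finite V] {G : GameGraph V} {f : V → V} {c : V → V → ℝ}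
    (hf : G.HasPotentials f c) {π : ℕ → V}
    (hπ : ∀ k, pathSum c π k < 0 → G.EveStep f (π k) (π (k + 1))) : LiminfAvgNonneg c π := by
  have := Fintype.ofFinite V
  refine liminfAvgNonneg_of_add_const fun ε hε => ?_
  obtain ⟨p, hp⟩ := hf ε hε
  have hpnorm (s : V) : |p s| ≤ ‖p‖ := norm_le_pi_norm p s
  have hinv (k : ℕ) : p (π k) - ε * k ≤ pathSum c π k + (‖c‖ + ‖p‖) := by
    induction k with
    | zero =>
      simp only [pathSum, Finset.range_zero, Finset.sum_empty, Nat.cast_zero]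
      linarith [(abs_le.1 (hpnorm (π 0))).2, norm_nonneg c]
    | succ k ih =>
      rw [pathSum_succ]
      push_cast
      rcases lt_or_ge (pathSum c π k) 0 with hneg | hnonneg
      · linarith [hp _ _ (hπ k hneg)]
      · have : 0 ≤ ε * (k + 1) := by positivity
        linarith [(abs_le.1 (hpnorm (π (k + 1)))).2,
          (abs_le.1 (abs_weight_le_norm c (π k) (π (k + 1)))).1]
  refine ⟨‖c‖ + 2 * ‖p‖, Eventually.of_forall fun k => ?_⟩
  linarith [hinv k, (abs_le.1 (hpnorm (π k))).1]

/-! ### Switching between two positional strategies -/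

/-- Eve's strategy that plays `f₁` as long as the total `c`-weight of the history is negative, and
`f₂` otherwise. The history is read as a sequence padded by the initial vertex, and its last
vertex contributes no step. -/
noncomputable def switching (G : GameGraph V) (c : V → V → ℝ) (f₁ f₂ : V → V) (l : List V) : V :=
  (if pathSum c (fun i => l.getD i G.init) (l.length - 1) < 0 then f₁ else f₂)
    (l.getLastD G.init)

lemma switching_prefixList (G : GameGraph V) (c : V → V → ℝ) (f₁ f₂ : V → V) (π : ℕ → V)
    (i : ℕ) :
    G.switching c f₁ f₂ (prefixList π i) = (if pathSum c π i < 0 then f₁ else f₂) (π i) := by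
  have hsum : pathSum c (fun j => (prefixList π i).getD j G.init) i = pathSum c π i :=
    Finset.sum_congr rfl fun j hj => by
      have hj : j < i := Finset.mem_range.1 hj
      beta_reduce
      rw [getD_prefixList π hj.le, getD_prefixList π hj]
  rw [switching, length_prefixList, Nat.add_sub_cancel, hsum, getLastD_prefixList]

lemma eveLegal_switching (G : GameGraph V) (c : V → V → ℝ) {f₁ f₂ : V → V}
    (hf₁ : ∀ s, G.E s (f₁ s)) (hf₂ : ∀ s, G.E s (f₂ s)) : G.EveLegal (G.switching c f₁ f₂) := by
  intro l v _
  rw [switching, List.getLastD_concat]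
  split_ifs
  exacts [hf₁ v, hf₂ v]

lemma eveWins_Icc_of_hasPotentials [Finite V] (G : GameGraph V) {a b : ℝ} (hab : a ≤ b)
    {f₁ f₂ : V → V} (hf₁ : ∀ s, G.E s (f₁ s)) (hf₂ : ∀ s, G.E s (f₂ s))
    (hpot₁ : G.HasPotentials f₁ fun s u => G.w s u - a)
    (hpot₂ : G.HasPotentials f₂ fun s u => b - G.w s u) :
    G.EveWins fun π => G.MP π ∈ Set.Icc a b := by
  let c (s u : V) : ℝ := G.w s u - a
  refine ⟨G.switching c f₁ f₂, G.eveLegal_switching c hf₁ hf₂, fun π hπ hcons => ?_⟩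
  have hmove (i : ℕ) (hi : π i ∈ G.Eve) :
      π (i + 1) = (if pathSum c π i < 0 then f₁ else f₂) (π i) :=
    (hcons i hi).trans (G.switching_prefixList c f₁ f₂ π i)
  refine ⟨(G.le_MP_iff π a).2 <| hpot₁.liminfAvgNonneg fun k hk => ⟨hπ.2 k, fun hi => ?_⟩,
    (G.MP_le_iff π b).2 <| LiminfAvgNonneg.limsupAvgNonneg <|
      hpot₂.liminfAvgNonneg fun k hk => ⟨hπ.2 k, fun hi => ?_⟩⟩
  · rw [hmove k hi, if_pos hk]
  · have hnonneg : 0 ≤ pathSum c π k := by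
      rw [pathSum_sub_weight] at hk
      rw [pathSum_weight_sub]
      linarith [mul_le_mul_of_nonneg_right hab (k.cast_nonneg (α := ℝ))]
    rw [hmove k hi, if_neg hnonneg.not_gt]

lemma eveWins_Icc_of_forall [Finite V] (G : GameGraph V) {a b : ℝ} (hab : a ≤ b)
    (hlow : ∀ v, ∃ σ, G.EveLegal σ ∧ ∀ π, G.IsPlayFrom v π → G.ConsEve σ π → a ≤ G.MP π)
    (hhigh : ∀ v, ∃ σ, G.EveLegal σ ∧ ∀ π, G.IsPlayFrom v π → G.ConsEve σ π → G.MP π ≤ b) :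
    G.EveWins fun π => G.MP π ∈ Set.Icc a b := by
  simp only [le_MP_iff] at hlow
  simp only [MP_le_iff] at hhigh
  obtain ⟨f₁, hf₁, hpot₁⟩ := G.exists_hasPotentials _ fun v =>
    let ⟨σ, hσ, hwin⟩ := hlow v
    ⟨σ, hσ, fun π hπ hcons => (hwin π hπ hcons).limsupAvgNonneg⟩
  obtain ⟨f₂, hf₂, hpot₂⟩ := G.exists_hasPotentials _ hhigh
  exact G.eveWins_Icc_of_hasPotentials hab hf₁ hf₂ hpot₁ hpot₂

/-! ### Traps and reachable vertices -/

lemma MP_restrict (G : GameGraph V) {U : Set V} (hU : G.Trap U) (h0 : G.init ∈ U) (π : ℕ → U) :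
    (G.restrict U hU h0).MP π = G.MP (fun i => (π i : V)) :=
  rfl

lemma EveWins.of_restrict {G : GameGraph V} {U : Set V} {hU : G.Trap U} {h0 : G.init ∈ U}
    {Win : (ℕ → V) → Prop}
    (hwin : (G.restrict U hU h0).EveWins fun π => Win fun i => (π i : V)) : G.EveWins Win := by
  obtain ⟨σU, hσU, hwin⟩ := hwin
  have : Nonempty U := ⟨⟨_, h0⟩⟩
  obtain ⟨r, hr⟩ : ∃ r : V → U, ∀ u : U, r u = u := Subtype.val_injective.hasLeftInverse
  obtain ⟨σ, hσ, hσ_eq⟩ := G.exists_eveLegal_eq fun l => σU (l.map r)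
  refine ⟨σ, hσ, fun π hπ hcons => ?_⟩
  have hmove (i : ℕ) (hi : π i ∈ U) (hEve : π i ∈ G.Eve) :
      π (i + 1) = σU (prefixList (fun j => r (π j)) i) := by
    have hrπ : (r (π i) : V) = π i := congrArg _ (hr ⟨π i, hi⟩)
    have hedge : G.E (r (π i)) (σU (prefixList (fun j => r (π j)) i)) :=
      hσU.edge_prefixList (π := fun j => r (π j)) (by rwa [restrict, Set.mem_ofPred_eq, hrπ])
    rw [hrπ] at hedge
    rw [hcons i hEve, hσ_eq π i (by rwa [map_prefixList]), map_prefixList]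
  have hmem (i : ℕ) : π i ∈ U := by
    induction i with
    | zero => exact hπ.1 ▸ h0
    | succ i ih =>
      by_cases hEve : π i ∈ G.Eve
      · exact hmove i ih hEve ▸ Subtype.coe_prop _
      · exact hU.1 _ ih hEve _ (hπ.2 i)
  have hrπ : (fun j => r (π j)) = fun j => ⟨π j, hmem j⟩ := funext fun j => hr ⟨π j, hmem j⟩
  refine hwin (fun j => ⟨π j, hmem j⟩) ⟨Subtype.ext hπ.1, hπ.2⟩ fun i hEve => Subtype.ext ?_
  exact (hmove i (hmem i) hEve).trans (by rw [hrπ])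

/-- The first `n` moves of `π` start at the initial vertex, follow edges, and respect Eve's
strategy `σ`; later values of `π` are irrelevant. -/
def IsHistory (G : GameGraph V) (σ : List V → V) (π : ℕ → V) (n : ℕ) : Prop :=
  π 0 = G.init ∧
    ∀ i < n, G.E (π i) (π (i + 1)) ∧ (π i ∈ G.Eve → π (i + 1) = σ (prefixList π i))

/-- The vertices to which some history consistent with Eve's strategy `σ` leads. -/
def reach (G : GameGraph V) (σ : List V → V) : Set V :=
  {v | ∃ π n, G.IsHistory σ π n ∧ π n = v}

lemma init_mem_reach (G : GameGraph V) (σ : List V → V) : G.init ∈ G.reach σ :=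
  ⟨fun _ => G.init, 0, ⟨rfl, by simp⟩, rfl⟩

namespace IsHistory

variable {G : GameGraph V} {σ : List V → V} {π ρ : ℕ → V} {n : ℕ}

lemma congr (hπ : G.IsHistory σ π n) (h : ∀ i ≤ n, π i = ρ i) : G.IsHistory σ ρ n := by
  refine ⟨h 0 n.zero_le ▸ hπ.1, fun i hi => ?_⟩
  rw [← h i hi.le, ← h (i + 1) hi, ← prefixList_congr fun j hj => h j (hj.trans hi.le)]
  exact hπ.2 i hi

lemma succ (hπ : G.IsHistory σ π n) (hE : G.E (π n) (π (n + 1)))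
    (hσ : π n ∈ G.Eve → π (n + 1) = σ (prefixList π n)) : G.IsHistory σ π (n + 1) := by
  refine ⟨hπ.1, fun i hi => ?_⟩
  obtain hi | rfl := Nat.lt_succ_iff_lt_or_eq.1 hi
  exacts [hπ.2 i hi, ⟨hE, hσ⟩]

lemma mem_reach_of_edge (hπ : G.IsHistory σ π n) {u : V} (hE : G.E (π n) u)
    (hσ : π n ∈ G.Eve → u = σ (prefixList π n)) : u ∈ G.reach σ := by
  have hle (i : ℕ) (hi : i ≤ n) : π i = Function.update π (n + 1) u i :=
    (Function.update_of_ne (by lia) _ _).symm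
  refine ⟨Function.update π (n + 1) u, n + 1, (hπ.congr hle).succ ?_ ?_, Function.update_self ..⟩
  · rwa [← hle n le_rfl, Function.update_self]
  · rwa [← hle n le_rfl, Function.update_self, ← prefixList_congr hle]

end IsHistory

lemma EveLegal.trap_reach {G : GameGraph V} {σ : List V → V} (hσ : G.EveLegal σ) :
    G.Trap (G.reach σ) := by
  constructor
  · rintro _ ⟨π, n, hπ, rfl⟩ hAdam u hu
    exact hπ.mem_reach_of_edge hu fun hEve => absurd hEve hAdam
  · rintro _ ⟨π, n, hπ, rfl⟩ hEve
    have hedge := hσ.edge_prefixList hEve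
    exact ⟨_, hπ.mem_reach_of_edge hedge fun _ => rfl, hedge⟩

/-- The subgame on the vertices that Eve's strategy `σ` allows to be reached. -/
abbrev EveLegal.reachGame {G : GameGraph V} {σ : List V → V} (hσ : G.EveLegal σ) :
    GameGraph (G.reach σ) :=
  G.restrict _ hσ.trap_reach (G.init_mem_reach σ)

/-- The play that follows `π` before time `n` and `ρ`, started at time `n`, from then on. -/
def splice (π : ℕ → V) (n : ℕ) (ρ : ℕ → V) (i : ℕ) : V :=
  if i < n then π i else ρ (i - n)

lemma splice_add (π : ℕ → V) (n : ℕ) (ρ : ℕ → V) (j : ℕ) : splice π n ρ (n + j) = ρ j := by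
  simp [splice]

lemma splice_of_le {π ρ : ℕ → V} {n : ℕ} (h : ρ 0 = π n) {i : ℕ} (hi : i ≤ n) :
    splice π n ρ i = π i := by
  obtain hi | rfl := hi.lt_or_eq
  · exact if_pos hi
  · exact (splice_add π i ρ 0).trans h

lemma prefixList_splice (π : ℕ → V) (n : ℕ) (ρ : ℕ → V) (j : ℕ) :
    prefixList (splice π n ρ) (n + j) = List.ofFn (fun i : Fin n => π i) ++ prefixList ρ j := by
  rw [prefixList_add]
  simp only [splice_add]
  congr 2
  exact funext fun i => if_pos i.2

lemma EveLegal.exists_residual {G : GameGraph V} {σ : List V → V} (hσ : G.EveLegal σ)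
    (v : G.reach σ) :
    ∃ σ', hσ.reachGame.EveLegal σ' ∧
      ∀ ρ, hσ.reachGame.IsPlayFrom v ρ → hσ.reachGame.ConsEve σ' ρ →
        ∃ π n, G.IsPlay π ∧ G.ConsEve σ π ∧ ∀ j, π (n + j) = ρ j := by
  obtain ⟨_, π, n, hπ, rfl⟩ := v
  have : Nonempty (G.reach σ) := ⟨⟨_, G.init_mem_reach σ⟩⟩
  obtain ⟨r, hr⟩ : ∃ r : V → G.reach σ, ∀ u : G.reach σ, r u = u :=
    Subtype.val_injective.hasLeftInverse
  obtain ⟨σ', hσ', hσ'_eq⟩ := hσ.reachGame.exists_eveLegal_eq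
    fun l => r (σ (List.ofFn (fun i : Fin n => π i) ++ l.map Subtype.val))
  refine ⟨σ', hσ', fun ρ hρ hcons => ?_⟩
  let π' : ℕ → V := splice π n fun j => ρ j
  have hadd (j : ℕ) : π' (n + j) = ρ j := splice_add ..
  have hstep (j : ℕ) (hj : G.IsHistory σ π' (n + j)) : G.IsHistory σ π' (n + j + 1) := by
    refine hj.succ ?_ fun hEve => ?_
    · rw [add_assoc, hadd, hadd]
      exact hρ.2 j
    have hedge : G.E (π' (n + j)) (σ (prefixList π' (n + j))) := hσ.edge_prefixList hEve
    have hmem : σ (prefixList π' (n + j)) ∈ G.reach σ := hj.mem_reach_of_edge hedge fun _ => rfl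
    have hval : (r (σ (List.ofFn (fun i : Fin n => π i) ++ (prefixList ρ j).map Subtype.val)) : V) =
        σ (prefixList π' (n + j)) := by
      rw [map_prefixList, ← prefixList_splice]
      exact congrArg Subtype.val (hr ⟨_, hmem⟩)
    rw [hadd] at hEve
    rw [hadd, ← hval] at hedge
    rw [add_assoc, hadd, hcons j hEve, hσ'_eq ρ j hedge]
    exact hval
  have hhist (m : ℕ) : G.IsHistory σ π' (n + m) := by
    induction m with
    | zero => exact hπ.congr fun i hi => (splice_of_le (congrArg Subtype.val hρ.1) hi).symm
    | succ m ih => exact hstep m ih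
  have hmove (i : ℕ) := (hhist (i + 1)).2 i (by lia)
  exact ⟨π', n, ⟨(hhist 0).1, fun i => (hmove i).1⟩, fun i => (hmove i).2, hadd⟩

lemma EveLegal.exists_residual_Icc [Finite V] {G : GameGraph V} {σ : List V → V}
    (hσ : G.EveLegal σ) {a b : ℝ}
    (hwin : ∀ π, G.IsPlay π → G.ConsEve σ π → G.MP π ∈ Set.Icc a b) (v : G.reach σ) :
    ∃ σ', hσ.reachGame.EveLegal σ' ∧
      ∀ ρ, hσ.reachGame.IsPlayFrom v ρ → hσ.reachGame.ConsEve σ' ρ →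
        hσ.reachGame.MP ρ ∈ Set.Icc a b := by
  obtain ⟨σ', hσ', hres⟩ := hσ.exists_residual v
  refine ⟨σ', hσ', fun ρ hρ hcons => ?_⟩
  obtain ⟨π, n, hπ, hπσ, hshift⟩ := hres ρ hρ hcons
  rw [MP_restrict, ← funext hshift, MP_shift]
  exact hwin π hπ hπσ

end GameGraph

/-- Eve wins the interval mean-payoff game `(G, [a, b])` iff there
is a trap `U` for Adam containing the initial vertex such that, in the induced
subgame `G|U`, from every vertex of `U` Eve has a strategy ensuring `MP(π) ≥ a` and a
strategy ensuring `MP(π) ≤ b`. -/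
theorem stmt8 {V : Type} [Fintype V] (G : GameGraph V) (a b : ℝ) (hab : a ≤ b) :
    G.EveWins (fun π => G.MP π ∈ Set.Icc a b) ↔
      ∃ (U : Set V) (hU : G.Trap U) (h0 : G.init ∈ U),
        ∀ v : U,
          (∃ σ : List U → U, (G.restrict U hU h0).EveLegal σ ∧
            ∀ π, (G.restrict U hU h0).IsPlayFrom v π →
              (G.restrict U hU h0).ConsEve σ π → a ≤ (G.restrict U hU h0).MP π) ∧
          (∃ σ : List U → U, (G.restrict U hU h0).EveLegal σ ∧
            ∀ π, (G.restrict U hU h0).IsPlayFrom v π →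
              (G.restrict U hU h0).ConsEve σ π → (G.restrict U hU h0).MP π ≤ b) := by
  constructor
  · rintro ⟨σ, hσ, hwin⟩
    refine ⟨G.reach σ, hσ.trap_reach, G.init_mem_reach σ, fun v => ?_⟩
    obtain ⟨σ', hσ', hIcc⟩ := hσ.exists_residual_Icc hwin v
    exact ⟨⟨σ', hσ', fun ρ hρ hcons => (hIcc ρ hρ hcons).1⟩,
      ⟨σ', hσ', fun ρ hρ hcons => (hIcc ρ hρ hcons).2⟩⟩
  · rintro ⟨U, hU, h0, h⟩
    have hwin := (G.restrict U hU h0).eveWins_Icc_of_forall hab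
      (fun v => (h v).1) (fun v => (h v).2)
    simp only [GameGraph.MP_restrict] at hwin
    exact hwin.of_restrict
end

section
/- Let λ ∈ (0, 1), let t ∈ ℕ, and let (a_1, a_1'), …, (a_n, a_n') be pairs of natural numbers defining a subset sum game: in round i (for i = 1, …, n), Adam if i is odd and Eve if i is even chooses one element of the pair (a_i, a_i'), and Eve wins if and only if the sum of the n chosen numbers equals t. Construct the interval discounted sum game with vertices v_1, …, v_{n+1}, initial vertex v_1, V_∃ = {v_i : i even}, two parallel edges from v_i to v_{i+1} of weights a_i / λ^{i−1} and a_i' / λ^{i−1} for 1 ≤ i ≤ n, a self-loop of weight 0 on v_{n+1}, discount factor λ, and winning set I = (t − 1, t + 1). Then Eve has a winning strategy in the subset sum game if and only if Eve has a winning strategy in this interval discounted sum game (a strategy ensuring DS_λ(π) ∈ I for every consistent play π). -/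
/-!
A play of the interval discounted sum game visits `0, 1, …, n` in order and then loops on the last
vertex, so it is nothing but a sequence of bits telling which of two parallel edges is taken. The
factor `λ ^ i` of the discounted sum cancels the denominator of the weight of the `i`-th edge, so
the discounted sum of a play is the sum of the numbers chosen in the subset sum game, and `t` is
the only integer in `(t - 1, t + 1)`. Eve's strategies translate along this correspondence: a legal
strategy moves from the current vertex, hence it only has to provide the next bit.
-/

open Filter

/-- A game graph given by a set `E` of directed edges (parallel edges allowed) over
the vertex set `V`: every vertex has an outgoing edge, `w` is the weight function,
`Eve` is the set of Eve's vertices and `init` is the initial vertex. -/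
structure EdgeGame (V : Type) (E : Type) where
  src : E → V
  tgt : E → V
  w : E → ℚ
  Eve : Set V
  init : V
  succ : ∀ v, ∃ e, src e = v

namespace EdgeGame

variable {V E : Type}

/-- A play is an infinite sequence of edges forming a path from the initial vertex. -/
def IsPlay (G : EdgeGame V E) (ρ : ℕ → E) : Prop :=
  G.src (ρ 0) = G.init ∧ ∀ i, G.src (ρ (i + 1)) = G.tgt (ρ i)

/-- The prefix `ρ 0, …, ρ i` of a play, as a list of edges. -/
def prefixList (ρ : ℕ → E) (i : ℕ) : List E :=
  List.ofFn (fun j : Fin (i + 1) => ρ j)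

/-- A strategy for Eve (mapping play prefixes to the next edge) is legal if it
always proposes an outgoing edge of the current (Eve) vertex. -/
def EveLegal (G : EdgeGame V E) (σ : List E → E) : Prop :=
  (G.init ∈ G.Eve → G.src (σ []) = G.init) ∧
  ∀ (l : List E) (e : E), G.tgt e ∈ G.Eve → G.src (σ (l ++ [e])) = G.tgt e

/-- The play `ρ` is consistent with Eve's strategy `σ`. -/
def ConsEve (G : EdgeGame V E) (σ : List E → E) (ρ : ℕ → E) : Prop :=
  (G.init ∈ G.Eve → ρ 0 = σ []) ∧
  ∀ i, G.tgt (ρ i) ∈ G.Eve → ρ (i + 1) = σ (prefixList ρ i)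

/-- Eve has a winning strategy for the objective `Win`. -/
def EveWins (G : EdgeGame V E) (Win : (ℕ → E) → Prop) : Prop :=
  ∃ σ : List E → E, G.EveLegal σ ∧ ∀ ρ, G.IsPlay ρ → G.ConsEve σ ρ → Win ρ

/-- Eve has a positional (memoryless) winning strategy. -/
def EveWinsPos (G : EdgeGame V E) (Win : (ℕ → E) → Prop) : Prop :=
  ∃ f : V → E, (∀ v ∈ G.Eve, G.src (f v) = v) ∧
    ∀ ρ, G.IsPlay ρ →
      ((G.init ∈ G.Eve → ρ 0 = f G.init) ∧
        ∀ i, G.tgt (ρ i) ∈ G.Eve → ρ (i + 1) = f (G.tgt (ρ i))) → Win ρ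

/-- The run of the memory structure `(δ, m)` of a finite-state machine while
reading the edges of the play `ρ`. -/
def memRun {M : Type} (δ : M → E → M) (m : M) (ρ : ℕ → E) : ℕ → M
  | 0 => m
  | i + 1 => δ (memRun δ m ρ i) (ρ i)

/-- Eve has a finite-memory winning strategy, i.e. one computed by a finite-state
machine reading the play. -/
def EveWinsFM (G : EdgeGame V E) (Win : (ℕ → E) → Prop) : Prop :=
  ∃ (M : Type) (_ : Fintype M) (m0 : M) (δ : M → E → M) (o : M → V → E),
    (∀ m, ∀ v ∈ G.Eve, G.src (o m v) = v) ∧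
    ∀ ρ, G.IsPlay ρ →
      ((G.init ∈ G.Eve → ρ 0 = o m0 G.init) ∧
        ∀ i, G.tgt (ρ i) ∈ G.Eve →
          ρ (i + 1) = o (memRun δ m0 ρ (i + 1)) (G.tgt (ρ i))) → Win ρ

/-- The discounted sum of a play, with discount factor `lam`. -/
noncomputable def DS (G : EdgeGame V E) (lam : ℝ) (ρ : ℕ → E) : ℝ :=
  ∑' i : ℕ, lam ^ i * (G.w (ρ i) : ℝ)

end EdgeGame
/-- Eve wins the subset sum game with target `t` and pairs `(a i, a' i)`: in round
`i` (1-based `i+1` for `i : Fin n`), Adam chooses if the round number is odd and Eve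
chooses if it is even; the choice `b i = true` selects `a i` and `b i = false`
selects `a' i`. Eve wins iff the sum of the chosen numbers is exactly `t`. -/
def SSGEveWins (n t : ℕ) (a a' : Fin n → ℕ) : Prop :=
  ∃ σ : List Bool → Bool,
    ∀ b : Fin n → Bool,
      (∀ i : Fin n, Even (i.1 + 1) →
        b i = σ (List.ofFn (fun j : Fin i.1 => b ⟨j.1, j.2.trans i.2⟩))) →
      (∑ i : Fin n, if b i then a i else a' i) = t

/-- The interval discounted sum game of Figure 4, associated with a subset sum game:
vertices `0, 1, …, n` (`0`-based, so vertex `i` is `v_{i+1}` of the paper), with two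
parallel edges from `i` to `i+1` of weights `a_{i+1} / λ^i` and `a'_{i+1} / λ^i`, and
a self-loop of weight `0` on the last vertex. Vertex `i` belongs to Eve iff the round
number `i+1` is even. -/
def G13 (n : ℕ) (a a' : Fin n → ℕ) (lam : ℚ) :
    EdgeGame (Fin (n + 1)) ((Fin n × Bool) ⊕ Unit) where
  src e :=
    match e with
    | Sum.inl (i, _) => i.castSucc
    | Sum.inr _ => Fin.last n
  tgt e :=
    match e with
    | Sum.inl (i, _) => i.succ
    | Sum.inr _ => Fin.last n
  w e :=
    match e with
    | Sum.inl (i, b) => (if b then (a i : ℚ) else (a' i : ℚ)) / lam ^ i.1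
    | Sum.inr _ => 0
  Eve := {v : Fin (n + 1) | Odd v.1}
  init := 0
  succ := by
    intro v
    by_cases h : v.1 < n
    · exact ⟨Sum.inl (⟨v.1, h⟩, true), Fin.ext rfl⟩
    · exact ⟨Sum.inr (), Fin.ext (by have := v.2; simp [Fin.last]; omega)⟩

/-- The list `[ρ 0, …, ρ (i - 1)]` of the first `i` terms of a sequence, which is what a strategy
reads before the `i`-th move, both in a game graph and in a subset sum game. -/
def history {α : Type*} (ρ : ℕ → α) (i : ℕ) : List α :=
  List.ofFn fun j : Fin i => ρ j

lemma history_succ {α : Type*} (ρ : ℕ → α) (i : ℕ) : history ρ (i + 1) = history ρ i ++ [ρ i] := by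
  simp only [history, List.ofFn_succ', List.concat_eq_append, Fin.val_castSucc, Fin.val_last]

lemma map_history {α β : Type*} (f : α → β) (ρ : ℕ → α) (i : ℕ) :
    (history ρ i).map f = history (f ∘ ρ) i :=
  List.map_ofFn

lemma mapIdx_history {α β : Type*} (f : ℕ → α → β) (ρ : ℕ → α) (i : ℕ) :
    (history ρ i).mapIdx f = history (fun j => f j (ρ j)) i := by
  apply List.ext_getElem <;> simp [history]

lemma history_congr {α : Type*} {ρ ρ' : ℕ → α} {i : ℕ} (h : ∀ j < i, ρ j = ρ' j) :
    history ρ i = history ρ' i :=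
  congrArg List.ofFn (funext fun j : Fin i => h j j.2)

lemma natCast_mem_Ioo_sub_one_add_one {R : Type*} [Ring R] [LinearOrder R] [IsStrictOrderedRing R]
    {m t : ℕ} : (m : R) ∈ Set.Ioo ((t : R) - 1) (t + 1) ↔ m = t := by
  rw [Set.mem_Ioo, sub_lt_iff_lt_add]
  norm_cast
  omega

namespace EdgeGame

variable {V E : Type} {G : EdgeGame V E} {σ : List E → E} {ρ : ℕ → E}

/-- The vertex reached after the list `l` of edges, namely the target of its last edge, or the
initial vertex if `l` is empty. The list need not be a path. -/
def endpoint (G : EdgeGame V E) (l : List E) : V :=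
  l.getLast?.elim G.init G.tgt

lemma endpoint_append_singleton (l : List E) (e : E) : G.endpoint (l ++ [e]) = G.tgt e := by
  simp only [endpoint, List.getLast?_concat, Option.elim_some]

lemma IsPlay.endpoint_history (hρ : G.IsPlay ρ) (i : ℕ) :
    G.endpoint (history ρ i) = G.src (ρ i) := by
  cases i with
  | zero => exact hρ.1.symm
  | succ i => rw [history_succ, endpoint_append_singleton, hρ.2]

lemma eveLegal_iff :
    G.EveLegal σ ↔ ∀ l, G.endpoint l ∈ G.Eve → G.src (σ l) = G.endpoint l := by
  refine ⟨fun hσ l => ?_, fun hσ => ⟨hσ [], fun l e => ?_⟩⟩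
  · induction l using List.reverseRecOn with
    | nil => exact hσ.1
    | append_singleton l e => simpa only [endpoint_append_singleton] using hσ.2 l e
  · simpa only [endpoint_append_singleton] using hσ (l ++ [e])

lemma IsPlay.consEve_iff (hρ : G.IsPlay ρ) :
    G.ConsEve σ ρ ↔ ∀ i, G.src (ρ i) ∈ G.Eve → ρ i = σ (history ρ i) := by
  refine ⟨fun h i => ?_, fun h => ⟨fun hi => ?_, fun i => ?_⟩⟩
  · cases i with
    | zero => exact hρ.1 ▸ h.1
    | succ i => exact hρ.2 i ▸ h.2 i
  · exact h 0 (hρ.1 ▸ hi)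
  · exact hρ.2 i ▸ h (i + 1)

end EdgeGame

/-- The bit sequence `c` follows the strategy `σ` of Eve in the subset sum game with `n` rounds.
Rounds are numbered from `0`, so that Eve plays the odd ones; the values of `c` from `n` on are
irrelevant. -/
def FollowsSSG (n : ℕ) (σ : List Bool → Bool) (c : ℕ → Bool) : Prop :=
  ∀ i < n, Odd i → c i = σ (history c i)

lemma ssgEveWins_iff {n t : ℕ} {a a' : Fin n → ℕ} :
    SSGEveWins n t a a' ↔ ∃ σ, ∀ c, FollowsSSG n σ c →
      (∑ i : Fin n, if c i then a i else a' i) = t := by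
  simp only [SSGEveWins, Nat.even_add_one, Nat.not_even_iff_odd]
  refine exists_congr fun σ =>
    ⟨fun hσ c hc => hσ (fun i => c i) fun i => hc i i.2, fun hσ b hb => ?_⟩
  let c : ℕ → Bool := fun i => if h : i < n then b ⟨i, h⟩ else true
  have hcb (i : ℕ) (hi : i < n) : c i = b ⟨i, hi⟩ := dif_pos hi
  have hc : FollowsSSG n σ c := fun i hi hodd => by
    rw [hcb i hi, hb ⟨i, hi⟩ hodd]
    exact congrArg (σ ∘ List.ofFn) (funext fun j => (hcb j _).symm)
  simpa only [hcb _ (Fin.is_lt _), Fin.eta] using hσ c hc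

namespace G13

variable {n : ℕ} {a a' : Fin n → ℕ} {lam : ℚ}
  {σ : List ((Fin n × Bool) ⊕ Unit) → (Fin n × Bool) ⊕ Unit}

/-- The edge labelled `b` that leaves the `i`-th vertex of a play: it leads from `i` to `i + 1` if
`i < n`, and is the self-loop on the last vertex otherwise. -/
def edge (n i : ℕ) (b : Bool) : (Fin n × Bool) ⊕ Unit :=
  if h : i < n then Sum.inl (⟨i, h⟩, b) else Sum.inr ()

/-- The bit labelling an edge; the value on the self-loop is arbitrary. -/
def bit : (Fin n × Bool) ⊕ Unit → Bool :=
  Sum.elim Prod.snd fun _ => true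

/-- The play that takes the edge labelled `c i` in round `i`. -/
def play (n : ℕ) (c : ℕ → Bool) (i : ℕ) : (Fin n × Bool) ⊕ Unit :=
  edge n i (c i)

lemma edge_of_lt {i : ℕ} (h : i < n) (b : Bool) : edge n i b = Sum.inl (⟨i, h⟩, b) :=
  dif_pos h

lemma edge_of_le {i : ℕ} (h : n ≤ i) (b : Bool) : edge n i b = Sum.inr () :=
  dif_neg h.not_gt

lemma bit_edge {i : ℕ} (h : i < n) (b : Bool) : bit (edge n i b) = b := by
  rw [edge_of_lt h]; rfl

lemma src_edge (i : ℕ) (b : Bool) : ((G13 n a a' lam).src (edge n i b) : ℕ) = min i n := by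
  obtain h | h := lt_or_ge i n
  · rw [edge_of_lt h, min_eq_left h.le]; rfl
  · rw [edge_of_le h, min_eq_right h]; rfl

lemma tgt_edge (i : ℕ) (b : Bool) : ((G13 n a a' lam).tgt (edge n i b) : ℕ) = min (i + 1) n := by
  obtain h | h := lt_or_ge i n
  · rw [edge_of_lt h, min_eq_left (Nat.succ_le_of_lt h)]; rfl
  · rw [edge_of_le h, min_eq_right (Nat.le_succ_of_le h)]; rfl

lemma src_edge_mem_Eve_iff (i : ℕ) (b : Bool) :
    (G13 n a a' lam).src (edge n i b) ∈ (G13 n a a' lam).Eve ↔ Odd (min i n) := by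
  change Odd ((G13 n a a' lam).src (edge n i b) : ℕ) ↔ _
  rw [src_edge]

lemma edge_bit_of_src_eq {e : (Fin n × Bool) ⊕ Unit} {i : ℕ}
    (h : ((G13 n a a' lam).src e : ℕ) = min i n) : edge n i (bit e) = e := by
  obtain ⟨j, b⟩ | _ := e
  · have hj : (j : ℕ) = min i n := h
    obtain rfl : i = j := by omega
    exact edge_of_lt j.2 b
  · have hn : n = min i n := h
    exact edge_of_le (by omega) _

lemma isPlay_play (c : ℕ → Bool) : (G13 n a a' lam).IsPlay (play n c) :=
  ⟨Fin.ext ((src_edge 0 _).trans (Nat.zero_min n)),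
    fun i => Fin.ext ((src_edge (i + 1) _).trans (tgt_edge i _).symm)⟩

lemma play_bit_comp {ρ : ℕ → (Fin n × Bool) ⊕ Unit} (hρ : (G13 n a a' lam).IsPlay ρ) :
    play n (bit ∘ ρ) = ρ := by
  funext i
  induction i with
  | zero => exact edge_bit_of_src_eq (by rw [hρ.1, Nat.zero_min]; rfl)
  | succ i ih => exact edge_bit_of_src_eq (by rw [hρ.2 i, ← ih]; exact tgt_edge i _)

lemma pow_mul_w_edge (hlam : lam ≠ 0) (i : Fin n) (b : Bool) :
    lam ^ (i : ℕ) * (G13 n a a' lam).w (edge n i b) = (if b then a i else a' i : ℕ) := by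
  rw [edge_of_lt i.2, Nat.cast_ite]
  exact mul_div_cancel₀ _ (pow_ne_zero _ hlam)

lemma w_edge_of_le {i : ℕ} (h : n ≤ i) (b : Bool) : (G13 n a a' lam).w (edge n i b) = 0 := by
  rw [edge_of_le h]; rfl

lemma DS_play (hlam : lam ≠ 0) (c : ℕ → Bool) :
    (G13 n a a' lam).DS lam (play n c) = (∑ i : Fin n, if c i then a i else a' i : ℕ) := by
  have hvanish : ∀ i ∉ Finset.range n, (lam : ℝ) ^ i * (G13 n a a' lam).w (play n c i) = 0 :=
    fun i hi => by
      rw [play, w_edge_of_le (by simpa using hi), Rat.cast_zero, mul_zero]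
  rw [EdgeGame.DS, tsum_eq_sum hvanish, Finset.sum_range, Nat.cast_sum]
  refine Finset.sum_congr rfl fun i _ => ?_
  rw [play, ← Rat.cast_pow, ← Rat.cast_mul, pow_mul_w_edge hlam, Rat.cast_natCast]

lemma consEve_play_iff (hσ : (G13 n a a' lam).EveLegal σ) (c : ℕ → Bool) :
    (G13 n a a' lam).ConsEve σ (play n c) ↔
      ∀ i < n, Odd i → c i = bit (σ (history (play n c) i)) := by
  have hplay : (G13 n a a' lam).IsPlay (play n c) := isPlay_play c
  have hmem (i : ℕ) :
      (G13 n a a' lam).src (play n c i) ∈ (G13 n a a' lam).Eve ↔ Odd (min i n) :=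
    src_edge_mem_Eve_iff i (c i)
  have hmove (i : ℕ) (hodd : Odd (min i n)) :
      edge n i (bit (σ (history (play n c) i))) = σ (history (play n c) i) := by
    have hsrc := EdgeGame.eveLegal_iff.1 hσ (history (play n c) i)
    rw [hplay.endpoint_history] at hsrc
    exact edge_bit_of_src_eq ((congrArg Fin.val (hsrc ((hmem i).2 hodd))).trans (src_edge i _))
  simp only [hplay.consEve_iff, hmem]
  refine ⟨fun h i hi hodd => ?_, fun h i hodd => ?_⟩
  · rw [← h i (by rwa [min_eq_left hi.le]), play, bit_edge hi]
  · rw [← hmove i hodd, play]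
    obtain hi | hi := lt_or_ge i n
    · rw [← h i hi (by rwa [min_eq_left hi.le] at hodd)]
    · rw [edge_of_le hi, edge_of_le hi]

/-- The strategy for Eve in the discounted sum game that takes the edge labelled by the choice of
`σ`. The edge leaves `endpoint l` and not the vertex numbered `l.length`, since a strategy has to be
legal on lists that are not paths as well. -/
def liftStrategy (a a' : Fin n → ℕ) (lam : ℚ) (σ : List Bool → Bool)
    (l : List ((Fin n × Bool) ⊕ Unit)) : (Fin n × Bool) ⊕ Unit :=
  edge n ((G13 n a a' lam).endpoint l) (σ (l.map bit))

/-- The strategy for Eve in the subset sum game that chooses the label of the edge taken by `σ`. -/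
def bitStrategy (σ : List ((Fin n × Bool) ⊕ Unit) → (Fin n × Bool) ⊕ Unit) (l : List Bool) : Bool :=
  bit (σ (l.mapIdx (edge n)))

lemma eveLegal_liftStrategy (σ : List Bool → Bool) :
    (G13 n a a' lam).EveLegal (liftStrategy a a' lam σ) :=
  EdgeGame.eveLegal_iff.2 fun _ _ =>
    Fin.ext ((src_edge _ _).trans (min_eq_left (Fin.is_le _)))

lemma consEve_liftStrategy_iff {σ : List Bool → Bool} {c : ℕ → Bool} :
    (G13 n a a' lam).ConsEve (liftStrategy a a' lam σ) (play n c) ↔ FollowsSSG n σ c := by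
  rw [consEve_play_iff (eveLegal_liftStrategy σ)]
  refine forall₃_congr fun i hi _ => ?_
  have hhist : (history (play n c) i).map bit = history c i := by
    rw [map_history]
    exact history_congr fun j hj => bit_edge (hj.trans hi) (c j)
  have hend : ((G13 n a a' lam).endpoint (history (play n c) i) : ℕ) = i := by
    rw [(isPlay_play c).endpoint_history, play, src_edge, min_eq_left hi.le]
  rw [liftStrategy, hend, hhist, bit_edge hi]

lemma consEve_iff_followsSSG_bitStrategy (hσ : (G13 n a a' lam).EveLegal σ) {c : ℕ → Bool} :
    (G13 n a a' lam).ConsEve σ (play n c) ↔ FollowsSSG n (bitStrategy σ) c := by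
  rw [consEve_play_iff hσ]
  simp only [FollowsSSG, bitStrategy, mapIdx_history]
  rfl

lemma eveWins_iff {Win : (ℕ → (Fin n × Bool) ⊕ Unit) → Prop} :
    (G13 n a a' lam).EveWins Win ↔ ∃ σ, ∀ c, FollowsSSG n σ c → Win (play n c) := by
  constructor
  · rintro ⟨σ, hlegal, hwin⟩
    exact ⟨bitStrategy σ, fun c hc =>
      hwin _ (isPlay_play c) ((consEve_iff_followsSSG_bitStrategy hlegal).2 hc)⟩
  · rintro ⟨σ, hwin⟩
    refine ⟨liftStrategy a a' lam σ, eveLegal_liftStrategy σ, fun ρ hρ hcons => ?_⟩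
    rw [← play_bit_comp hρ] at hcons ⊢
    exact hwin _ (consEve_liftStrategy_iff.1 hcons)

end G13

theorem stmt13_general (n t : ℕ) (a a' : Fin n → ℕ) {lam : ℚ} (hlam : lam ≠ 0) {I : Set ℝ}
    (hI : ∀ m : ℕ, (m : ℝ) ∈ I ↔ m = t) :
    SSGEveWins n t a a' ↔
      (G13 n a a' lam).EveWins (fun ρ => (G13 n a a' lam).DS lam ρ ∈ I) := by
  simp only [ssgEveWins_iff, G13.eveWins_iff, G13.DS_play hlam, hI]

/-- Eve wins the subset sum game given by `t` and the pairs
`(a i, a' i)` iff she wins the associated interval discounted sum game with discount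
factor `λ` and winning set `I = (t − 1, t + 1)`. -/
theorem stmt13 (n t : ℕ) (a a' : Fin n → ℕ) (lam : ℚ) (h0 : 0 < lam) (h1 : lam < 1) :
    SSGEveWins n t a a' ↔
      (G13 n a a' lam).EveWins
        (fun ρ => (G13 n a a' lam).DS (lam : ℝ) ρ ∈ Set.Ioo ((t : ℝ) - 1) ((t : ℝ) + 1)) :=
  stmt13_general n t a a' h0.ne' fun _ => natCast_mem_Ioo_sub_one_add_one
end

section
/- For every λ ∈ (0, 1) there exists an interval discounted sum game (G, I, λ), with I a non-singleton interval, in which Eve has a winning strategy (ensuring DS_λ(π) ∈ I for every consistent play) but Eve has no positional winning strategy. -/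
/-!
Let Adam move first to Eve's only vertex, from which Eve moves to a sink of weight `0`. A strategy
of Eve may react to Adam's move, so she wins iff `∀ a, ∃ b, Win a b`; a positional strategy commits
to its move beforehand, so it wins iff `∃ b, ∀ a, Win a b`. Take the moves to be signs, used as
weights: a play then has discounted sum `a + λ b`, whose absolute value is `1 + |λ|` if `a b` has
the sign of `λ`, and the distance between `1` and `|λ|` otherwise. When `λ ≠ 0`, only the latter is
at most `max 1 |λ|`, so with `I = [-max 1 |λ|, max 1 |λ|]` every `a` has a winning reply `b`, but
this reply depends on `a`. All but two terms of the discounted sum vanish, so it converges for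
every `λ`.
-/

open Filter

/-- The vertices of `responseGame`. -/
inductive ResponseVertex
  | adam
  | eve
  | sink
  deriving DecidableEq

instance : Fintype ResponseVertex where
  elems := {.adam, .eve, .sink}
  complete v := by cases v <;> simp

/-- The edges of `responseGame`: Adam's moves, Eve's moves and the loop at the sink. -/
inductive ResponseEdge (A B : Type)
  | adam (a : A)
  | eve (b : B)
  | loop
  deriving Fintype

section ResponseGame

variable {A B : Type}

/-- The two-stage game in which Adam picks a move in `A`, Eve replies with a move in `B`, and the
play stays forever in a sink of weight `0`. Moves are parallel edges, so that Eve's only vertex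
does not remember the choice of Adam. -/
def responseGame [Nonempty A] [Nonempty B] (u : A → ℚ) (v : B → ℚ) :
    EdgeGame ResponseVertex (ResponseEdge A B) where
  src
    | .adam _ => .adam
    | .eve _ => .eve
    | .loop => .sink
  tgt
    | .adam _ => .eve
    | .eve _ => .sink
    | .loop => .sink
  w
    | .adam a => u a
    | .eve b => v b
    | .loop => 0
  Eve := {.eve}
  init := .adam
  succ
    | .adam => ⟨.adam (Classical.arbitrary A), rfl⟩
    | .eve => ⟨.eve (Classical.arbitrary B), rfl⟩
    | .sink => ⟨.loop, rfl⟩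

/-- The play of `responseGame` in which Adam picks `a` and Eve replies with `b`. -/
def responsePlay (a : A) (b : B) : ℕ → ResponseEdge A B
  | 0 => .adam a
  | 1 => .eve b
  | _ + 2 => .loop

/-- The strategy for Eve in `responseGame` that replies to `a` with `g a`. Prefixes that do not end
with a move of Adam never end at Eve's vertex, and get an arbitrary value. -/
noncomputable def responseStrategy [Nonempty A] (g : A → B) (l : List (ResponseEdge A B)) :
    ResponseEdge A B :=
  match l.getLast? with
  | some (.adam a) => .eve (g a)
  | _ => .eve (g (Classical.arbitrary A))

variable [Nonempty A] [Nonempty B] {u : A → ℚ} {v : B → ℚ}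

lemma responseGame_src_eq_adam_iff {e : ResponseEdge A B} :
    (responseGame u v).src e = .adam ↔ ∃ a, e = .adam a := by
  cases e <;> simp [responseGame]

lemma responseGame_src_eq_eve_iff {e : ResponseEdge A B} :
    (responseGame u v).src e = .eve ↔ ∃ b, e = .eve b := by
  cases e <;> simp [responseGame]

lemma responseGame_src_eq_sink_iff {e : ResponseEdge A B} :
    (responseGame u v).src e = .sink ↔ e = .loop := by
  cases e <;> simp [responseGame]

lemma responseGame_tgt_mem_Eve_iff {e : ResponseEdge A B} :
    (responseGame u v).tgt e ∈ (responseGame u v).Eve ↔ ∃ a, e = .adam a := by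
  cases e <;> simp [responseGame]

lemma responseGame_init_notMem_Eve : (responseGame u v).init ∉ (responseGame u v).Eve := by
  simp [responseGame]

lemma isPlay_responsePlay (a : A) (b : B) : (responseGame u v).IsPlay (responsePlay a b) :=
  ⟨rfl, fun
    | 0 => rfl
    | 1 => rfl
    | _ + 2 => rfl⟩

lemma exists_eq_responsePlay {ρ : ℕ → ResponseEdge A B} (hρ : (responseGame u v).IsPlay ρ) :
    ∃ a b, ρ = responsePlay a b := by
  obtain ⟨hinit, hstep⟩ := hρ
  obtain ⟨a, ha⟩ := responseGame_src_eq_adam_iff.mp hinit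
  obtain ⟨b, hb⟩ := responseGame_src_eq_eve_iff.mp ((hstep 0).trans (by rw [ha]; rfl))
  have hloop (i : ℕ) : ρ (i + 2) = .loop := by
    induction i with
    | zero => exact responseGame_src_eq_sink_iff.mp ((hstep 1).trans (by rw [hb]; rfl))
    | succ i ih => exact responseGame_src_eq_sink_iff.mp ((hstep (i + 2)).trans (by rw [ih]; rfl))
  exact ⟨a, b, funext fun
    | 0 => ha
    | 1 => hb
    | i + 2 => hloop i⟩

/-- Only the second edge of a play leaves Eve's vertex, so consistency with any kind of strategy
is a condition on that edge alone. -/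
lemma responsePlay_consistent_iff (a : A) (b : B) (next : ℕ → ResponseEdge A B) :
    (∀ i, (responseGame u v).tgt (responsePlay a b i) ∈ (responseGame u v).Eve →
      responsePlay a b (i + 1) = next i) ↔ next 0 = .eve b :=
  ⟨fun h => (h 0 (responseGame_tgt_mem_Eve_iff.mpr ⟨a, rfl⟩)).symm, fun h => fun
    | 0, _ => h.symm
    | 1, hi => by simp [responsePlay, responseGame_tgt_mem_Eve_iff] at hi
    | i + 2, hi => by simp [responsePlay, responseGame_tgt_mem_Eve_iff] at hi⟩

lemma consEve_responsePlay_iff {σ : List (ResponseEdge A B) → ResponseEdge A B} {a : A} {b : B} :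
    (responseGame u v).ConsEve σ (responsePlay a b) ↔ σ [.adam a] = .eve b := by
  have h := responsePlay_consistent_iff (u := u) (v := v) a b
    fun i => σ (EdgeGame.prefixList (responsePlay a b) i)
  simpa [EdgeGame.ConsEve, responseGame_init_notMem_Eve, EdgeGame.prefixList, responsePlay] using h

lemma eveLegal_responseStrategy (g : A → B) :
    (responseGame u v).EveLegal (responseStrategy g) := by
  refine ⟨fun h => absurd h responseGame_init_notMem_Eve, fun l e he => ?_⟩
  obtain ⟨a, rfl⟩ := responseGame_tgt_mem_Eve_iff.mp he
  simp [responseStrategy, responseGame]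

theorem eveWins_responseGame_iff {Win : (ℕ → ResponseEdge A B) → Prop} :
    (responseGame u v).EveWins Win ↔ ∀ a, ∃ b, Win (responsePlay a b) := by
  constructor
  · rintro ⟨σ, ⟨-, hlegal⟩, hwin⟩ a
    obtain ⟨b, hb⟩ := responseGame_src_eq_eve_iff.mp
      (hlegal [] (.adam a) (responseGame_tgt_mem_Eve_iff.mpr ⟨a, rfl⟩))
    exact ⟨b, hwin _ (isPlay_responsePlay a b) (consEve_responsePlay_iff.mpr hb)⟩
  · intro h
    choose g hg using h
    refine ⟨responseStrategy g, eveLegal_responseStrategy g, fun ρ hρ hcons => ?_⟩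
    obtain ⟨a, b, rfl⟩ := exists_eq_responsePlay hρ
    obtain rfl : g a = b := ResponseEdge.eve.inj (consEve_responsePlay_iff.mp hcons)
    exact hg a

theorem eveWinsPos_responseGame_iff {Win : (ℕ → ResponseEdge A B) → Prop} :
    (responseGame u v).EveWinsPos Win ↔ ∃ b, ∀ a, Win (responsePlay a b) := by
  constructor
  · rintro ⟨f, hlegal, hwin⟩
    obtain ⟨b, hb⟩ := responseGame_src_eq_eve_iff.mp (hlegal .eve rfl)
    refine ⟨b, fun a => hwin _ (isPlay_responsePlay a b)
      ⟨fun h => absurd h responseGame_init_notMem_Eve, ?_⟩⟩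
    exact (responsePlay_consistent_iff a b _).mpr hb
  · rintro ⟨b, hb⟩
    refine ⟨fun _ => .eve b, fun _ hx => hx.symm, fun ρ hρ hcons => ?_⟩
    obtain ⟨a, c, rfl⟩ := exists_eq_responsePlay hρ
    obtain rfl : b = c := ResponseEdge.eve.inj ((responsePlay_consistent_iff a c _).mp hcons.2)
    exact hb a

lemma hasSum_responsePlay (lam : ℝ) (a : A) (b : B) :
    HasSum (fun i => lam ^ i * ((responseGame u v).w (responsePlay a b i) : ℝ))
      (u a + lam * v b) := by
  rw [← hasSum_nat_add_iff' 2]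
  simp [Finset.sum_range_succ, responsePlay, responseGame, hasSum_zero]

lemma DS_responsePlay (lam : ℝ) (a : A) (b : B) :
    (responseGame u v).DS lam (responsePlay a b) = u a + lam * v b :=
  (hasSum_responsePlay lam a b).tsum_eq

end ResponseGame

section UnitWeights

lemma exists_units_eq_mul_abs {R : Type*} [Ring R] [LinearOrder R] (x : R) :
    ∃ s : ℤˣ, x = (s : ℤ) * |x| := by
  rcases abs_choice x with h | h
  · exact ⟨1, by simp [h]⟩
  · exact ⟨-1, by simp [h]⟩

variable {R : Type*} [CommRing R] [LinearOrder R] [IsStrictOrderedRing R]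

lemma exists_units_abs_add_mul_le (x : R) (a : ℤˣ) :
    ∃ b : ℤˣ, |((a : ℤ) : R) + x * (b : ℤ)| ≤ max 1 |x| := by
  obtain ⟨s, hs⟩ := exists_units_eq_mul_abs x
  have hss : ((s : ℤ) : R) * (s : ℤ) = 1 := by exact_mod_cast Int.units_coe_mul_self s
  refine ⟨-(s * a), ?_⟩
  calc |((a : ℤ) : R) + x * ((-(s * a) : ℤˣ) : ℤ)|
      = |((a : ℤ) : R) * (1 - |x|)| := by
        congr 1
        push_cast
        linear_combination (-(s : ℤ) * (a : ℤ)) * hs - (a : ℤ) * |x| * hss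
    _ = |(1 - |x|)| := by rw [abs_mul, abs_unit_intCast, one_mul]
    _ ≤ max 1 |x| := by
        rw [abs_le]
        constructor <;> linarith [le_max_left 1 |x|, le_max_right 1 |x|, abs_nonneg x]

lemma exists_units_lt_abs_add_mul {x : R} (hx : x ≠ 0) (b : ℤˣ) :
    ∃ a : ℤˣ, max 1 |x| < |((a : ℤ) : R) + x * (b : ℤ)| := by
  obtain ⟨s, hs⟩ := exists_units_eq_mul_abs x
  refine ⟨s * b, ?_⟩
  calc max 1 |x| < 1 + |x| := max_lt (lt_add_of_pos_right 1 (abs_pos.mpr hx))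
        (lt_add_of_pos_left |x| one_pos)
    _ = |(1 + |x|)| := (abs_of_nonneg (by positivity)).symm
    _ = |(((s * b : ℤˣ) : ℤ) : R) * (1 + |x|)| := by rw [abs_mul, abs_unit_intCast, one_mul]
    _ = |(((s * b : ℤˣ) : ℤ) : R) + x * (b : ℤ)| := by
        congr 1
        push_cast
        linear_combination -((b : ℤ) : R) * hs

end UnitWeights

/-- The game in which Adam and then Eve pick a sign, which is the weight of their move. -/
def signGame : EdgeGame ResponseVertex (ResponseEdge ℤˣ ℤˣ) :=
  responseGame (fun a => (a : ℤ)) (fun b => (b : ℤ))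

lemma signGame_DS_mem_Icc_iff {lam r : ℝ} {a b : ℤˣ} :
    signGame.DS lam (responsePlay a b) ∈ Set.Icc (-r) r ↔
      |((a : ℤ) : ℝ) + lam * (b : ℤ)| ≤ r := by
  rw [signGame, DS_responsePlay, Set.mem_Icc, ← abs_le]
  simp only [Rat.cast_intCast]

theorem stmt14_general :
    ∃ (V E : Type) (_ : Finite V) (_ : Finite E) (G : EdgeGame V E), ∀ lam : ℝ, lam ≠ 0 →
      (∀ ρ, G.IsPlay ρ → Summable fun i => lam ^ i * (G.w (ρ i) : ℝ)) ∧
      ∃ I : Set ℝ, I.OrdConnected ∧ I.Nontrivial ∧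
        G.EveWins (fun ρ => G.DS lam ρ ∈ I) ∧
        ¬ G.EveWinsPos (fun ρ => G.DS lam ρ ∈ I) := by
  refine ⟨ResponseVertex, ResponseEdge ℤˣ ℤˣ, inferInstance, inferInstance, signGame,
    fun lam hlam => ?_⟩
  have hlt : -max 1 |lam| < max 1 |lam| := neg_lt_self (by positivity)
  refine ⟨fun ρ hρ => ?_, Set.Icc (-max 1 |lam|) (max 1 |lam|), Set.ordConnected_Icc,
    ⟨_, Set.left_mem_Icc.mpr hlt.le, _, Set.right_mem_Icc.mpr hlt.le, hlt.ne⟩, ?_, ?_⟩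
  · obtain ⟨a, b, rfl⟩ := exists_eq_responsePlay hρ
    exact (hasSum_responsePlay lam a b).summable
  · exact eveWins_responseGame_iff.mpr fun a =>
      (exists_units_abs_add_mul_le lam a).imp fun _ => signGame_DS_mem_Icc_iff.mpr
  · intro hpos
    obtain ⟨b, hb⟩ := eveWinsPos_responseGame_iff.mp hpos
    obtain ⟨a, ha⟩ := exists_units_lt_abs_add_mul hlam b
    exact ha.not_ge (signGame_DS_mem_Icc_iff.mp (hb a))

/-- For every discount factor `λ ∈ (0, 1)` there is an interval
discounted sum game `(G, I, λ)`, with `I` a non-singleton interval, in which Eve has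
a winning strategy (ensuring `DS_λ(π) ∈ I` for every consistent play) but no
positional winning strategy. -/
theorem stmt14 (lam : ℝ) (h0 : 0 < lam) (h1 : lam < 1) :
    ∃ (V E : Type) (G : EdgeGame V E) (I : Set ℝ),
      I.OrdConnected ∧ (∃ x ∈ I, ∃ y ∈ I, x ≠ y) ∧
      G.EveWins (fun ρ => G.DS lam ρ ∈ I) ∧
      ¬ G.EveWinsPos (fun ρ => G.DS lam ρ ∈ I) := by
  obtain ⟨V, E, -, -, G, hG⟩ := stmt14_general
  exact ⟨V, E, G, (hG lam h0.ne').2⟩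
end

section
/- There exists a sequence (b_i)_{i∈ℕ} with b_i ∈ {0, 1} for all i such that Σ_{i=0}^∞ (2/3)^i · b_i = 3/2, but no eventually periodic sequence (b_i)_{i∈ℕ} with b_i ∈ {0, 1} satisfies Σ_{i=0}^∞ (2/3)^i · b_i = 3/2. Consequently, in the one-player exact-value discounted sum game with discount factor λ = 2/3 consisting of an initial edge of weight −1 followed by repeated choices between a self-loop of weight +1 and a self-loop of weight 0, Eve has a strategy achieving discounted sum exactly 0, but no finite-memory strategy achieves it. -/
/-!
The value `3/2 = (2/3)⁻¹` only matters through being the inverse of the discount factor `λ`. For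
`1/2 ≤ λ < 1`, the interval `[0, (1 - λ)⁻¹]` is covered by its images under `y ↦ λ y` and
`y ↦ 1 + λ y`, so each of its points, in particular `λ⁻¹`, has a greedy expansion `∑ λ^i b i` with
digits `0` and `1`. If an integer sequence `b` with `∑ λ^i b i = λ⁻¹` has period `p` from some
index on, then `(1 - λ^p) λ⁻¹ ∈ ℤ[λ]`, hence `λ⁻¹ ∈ ℤ[λ]`, which makes `λ⁻¹` an algebraic
integer; but `3/2` is not one. In the game, discounted sum `0` means `∑ λ^i b i = λ⁻¹` for the
sequence `b` of Eve's choices, and a finite-state machine on a finite graph, being an iteration on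
a finite set, generates an eventually periodic play.
-/

open Filter

/-- The one-player discounted sum game of Figure 5: an initial edge (edge `0`) of
weight `−1` from vertex `0` to vertex `1`, followed by repeated choices between a
self-loop of weight `+1` (edge `1`) and a self-loop of weight `0` (edge `2`) on
vertex `1`. All vertices belong to Eve. -/
def G15 : EdgeGame (Fin 2) (Fin 3) where
  src e := if e = 0 then 0 else 1
  tgt _ := 1
  w e := if e = 0 then -1 else if e = 1 then 1 else 0
  Eve := Set.univ
  init := 0
  succ := by
    intro v
    by_cases h : v = 0
    · exact ⟨0, by simp [h]⟩
    · refine ⟨1, by simp; omega⟩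

section GeometricWeights

variable {R : Type*} [NormedRing R] [CompleteSpace R] {lam : R} {x : ℕ → R} {C : ℝ}

lemma summable_pow_mul_of_norm_le (hlam : ‖lam‖ < 1) (hx : ∀ n, ‖x n‖ ≤ C) :
    Summable fun i ↦ lam ^ i * x i := by
  refine .of_norm_bounded ((summable_norm_geometric_of_norm_lt_one hlam).mul_right C) fun i ↦ ?_
  exact (norm_mul_le _ _).trans (by gcongr; exact hx i)

lemma hasSum_pow_mul_of_remainder {a : ℕ → R} (hlam : ‖lam‖ < 1) (hx : ∀ n, ‖x n‖ ≤ C)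
    (hrem : ∀ n, x n = a n + lam * x (n + 1)) : HasSum (fun i ↦ lam ^ i * a i) (x 0) := by
  have hsum := (summable_pow_mul_of_norm_le hlam hx).hasSum
  have htele := hsum.sub ((hasSum_nat_add_iff' 1).mpr hsum)
  have hterm (i : ℕ) : lam ^ i * x i - lam ^ (i + 1) * x (i + 1) = lam ^ i * a i := by
    rw [hrem i, pow_succ, mul_add, mul_assoc, add_sub_cancel_right]
  simpa [hterm] using htele

end GeometricWeights

section GreedyExpansion

/-- The greedy 0-1 digit of `y`: the largest digit not exceeding `y`, for `y ≥ 0`. -/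
noncomputable def greedyDigit (y : ℝ) : ℕ := if 1 ≤ y then 1 else 0

/-- The remainder map of the greedy expansion in powers of `lam`: what is left to be expanded
after the greedy digit of `y` has been split off. -/
noncomputable def greedyRem (lam y : ℝ) : ℝ := (y - greedyDigit y) / lam

lemma greedyDigit_le_one (y : ℝ) : greedyDigit y ≤ 1 := by
  unfold greedyDigit
  split_ifs <;> simp

variable {lam : ℝ}

lemma mapsTo_greedyRem (hlam : lam ∈ Set.Ico (1 / 2) 1) :
    Set.MapsTo (greedyRem lam) (Set.Icc 0 (1 - lam)⁻¹) (Set.Icc 0 (1 - lam)⁻¹) := by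
  rintro y ⟨hy0, hy⟩
  have hpos : 0 < lam := by linarith [hlam.1]
  have hpos' : 0 < 1 - lam := by linarith [hlam.2]
  have hfix : lam * (1 - lam)⁻¹ = (1 - lam)⁻¹ - 1 := by field_simp; ring
  have hone : 1 ≤ (1 - lam)⁻¹ * lam := by
    rw [inv_mul_eq_div, one_le_div hpos']
    linarith [hlam.1]
  unfold greedyRem greedyDigit
  rw [Set.mem_Icc, le_div_iff₀ hpos, div_le_iff₀ hpos]
  split_ifs with h <;> push_cast <;> constructor <;> linarith

lemma exists_hasSum_pow_mul_of_mem_Icc (hlam : lam ∈ Set.Ico (1 / 2) 1) {x : ℝ}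
    (hx : x ∈ Set.Icc 0 (1 - lam)⁻¹) :
    ∃ b : ℕ → ℕ, (∀ i, b i ≤ 1) ∧ HasSum (fun i ↦ lam ^ i * b i) x := by
  have hpos : 0 < lam := by linarith [hlam.1]
  have hmem (n : ℕ) := (mapsTo_greedyRem hlam).iterate n hx
  refine ⟨fun n ↦ greedyDigit ((greedyRem lam)^[n] x), fun n ↦ greedyDigit_le_one _, ?_⟩
  refine hasSum_pow_mul_of_remainder (x := fun n ↦ (greedyRem lam)^[n] x) (C := (1 - lam)⁻¹)
    (by rw [Real.norm_of_nonneg hpos.le]; exact hlam.2)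
    (fun n ↦ by rw [Real.norm_of_nonneg (hmem n).1]; exact (hmem n).2) fun n ↦ ?_
  rw [Function.iterate_succ_apply', greedyRem, mul_div_cancel₀ _ hpos.ne', add_sub_cancel]

lemma exists_hasSum_pow_mul_eq_inv (hlam : lam ∈ Set.Ico (1 / 2) 1) :
    ∃ b : ℕ → ℕ, (∀ i, b i ≤ 1) ∧ HasSum (fun i ↦ lam ^ i * b i) lam⁻¹ := by
  have hpos : 0 < lam := by linarith [hlam.1]
  refine exists_hasSum_pow_mul_of_mem_Icc hlam ⟨by positivity, ?_⟩
  exact inv_anti₀ (by linarith [hlam.2]) (by linarith [hlam.1])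

end GreedyExpansion

/-- A sequence is eventually periodic if it has a positive period from some index on. -/
def EventuallyPeriodic {α : Type*} (a : ℕ → α) : Prop :=
  ∃ k p : ℕ, 0 < p ∧ ∀ i, k ≤ i → a (i + p) = a i

namespace EventuallyPeriodic

variable {α β : Type*} {a : ℕ → α}

lemma comp (ha : EventuallyPeriodic a) (g : α → β) : EventuallyPeriodic fun i ↦ g (a i) := by
  obtain ⟨k, p, hp, hper⟩ := ha
  exact ⟨k, p, hp, fun i hi ↦ congrArg g (hper i hi)⟩

lemma comp_add_right (ha : EventuallyPeriodic a) (n : ℕ) :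
    EventuallyPeriodic fun i ↦ a (i + n) := by
  obtain ⟨k, p, hp, hper⟩ := ha
  refine ⟨k, p, hp, fun i hi ↦ ?_⟩
  simpa only [add_right_comm] using hper (i + n) (by lia)

lemma iterate [Finite α] (f : α → α) (x : α) : EventuallyPeriodic fun n ↦ f^[n] x := by
  obtain ⟨m, n, hne, heq⟩ := Finite.exists_ne_map_eq_of_infinite fun n ↦ f^[n] x
  wlog hlt : m < n generalizing m n
  · exact this n m hne.symm heq.symm (by lia)
  refine ⟨m, n - m, by lia, fun i hi ↦ ?_⟩
  calc f^[i + (n - m)] x = f^[i - m] (f^[n] x) := by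
        rw [← Function.iterate_add_apply, show i + (n - m) = i - m + n by lia]
    _ = f^[i - m] (f^[m] x) := congrArg _ heq.symm
    _ = f^[i] x := by rw [← Function.iterate_add_apply, Nat.sub_add_cancel hi]

end EventuallyPeriodic

section Integrality

lemma one_sub_pow_mul_eq_of_hasSum {R : Type*} [Ring R] [TopologicalSpace R]
    [IsTopologicalRing R] [T2Space R] {lam s : R} {a : ℕ → R} {k p : ℕ}
    (hs : HasSum (fun i ↦ lam ^ i * a i) s) (hper : ∀ i, k ≤ i → a (i + p) = a i) :
    (1 - lam ^ p) * s = ∑ i ∈ Finset.range (k + p), lam ^ i * a i -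
      lam ^ p * ∑ i ∈ Finset.range k, lam ^ i * a i := by
  have htail := ((hasSum_nat_add_iff' k).mpr hs).mul_left (lam ^ p)
  have hshift (i : ℕ) :
      lam ^ (i + (k + p)) * a (i + (k + p)) = lam ^ p * (lam ^ (i + k) * a (i + k)) := by
    rw [← add_assoc, hper (i + k) (by lia), ← mul_assoc, ← pow_add, add_comm p]
  have hstail := (hasSum_nat_add_iff' (k + p)).mpr hs
  simp only [hshift] at hstail
  have heq := htail.unique hstail
  rw [mul_sub, sub_eq_sub_iff_add_eq_add] at heq
  rw [sub_mul, one_mul, sub_eq_sub_iff_add_eq_add, ← heq, add_comm]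

variable {A K : Type*} [CommRing A] [Field K] [Algebra A K]

open Polynomial in
lemma isIntegral_inv_of_mem_adjoin {x : K} (hx : x ≠ 0) (h : x⁻¹ ∈ Algebra.adjoin A {x}) :
    IsIntegral A x⁻¹ := by
  rw [Algebra.adjoin_singleton_eq_range_aeval] at h
  obtain ⟨q, hq⟩ : ∃ q : A[X], aeval x q = x⁻¹ := h
  let _ : Invertible x := invertibleOfNonzero hx
  have hrev : aeval x⁻¹ q.reverse * x ^ q.natDegree = x⁻¹ := by
    simpa only [invOf_eq_inv, ← aeval_def, hq] using eval₂_reverse_mul_pow (algebraMap A K) x q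
  refine ⟨X ^ (q.natDegree + 1) - q.reverse, monic_X_pow_sub ?_, ?_⟩
  · exact degree_le_natDegree.trans_lt (by exact_mod_cast Nat.lt_succ_of_le q.reverse_natDegree_le)
  · rw [← aeval_def, map_sub, map_pow, aeval_X, sub_eq_zero, pow_succ', inv_pow]
    exact ((eq_mul_inv_iff_mul_eq₀ (pow_ne_zero _ hx)).mpr hrev).symm

variable [TopologicalSpace K] [IsTopologicalRing K] [T2Space K] {lam : K} {b : ℕ → A}

lemma isIntegral_inv_of_hasSum (hlam : lam ≠ 0) (hb : EventuallyPeriodic b)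
    (hs : HasSum (fun i ↦ lam ^ i * algebraMap A K (b i)) lam⁻¹) : IsIntegral A lam⁻¹ := by
  obtain ⟨k, p, hp, hper⟩ := hb
  set S := Algebra.adjoin A {lam}
  have hpow (i : ℕ) : lam ^ i ∈ S := pow_mem (Algebra.self_mem_adjoin_singleton A lam) i
  have hpart (n : ℕ) : ∑ i ∈ Finset.range n, lam ^ i * algebraMap A K (b i) ∈ S :=
    sum_mem fun i _ ↦ mul_mem (hpow i) (S.algebraMap_mem (b i))
  have hinv : lam⁻¹ = (1 - lam ^ p) * lam⁻¹ + lam ^ (p - 1) := by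
    rw [pow_sub₀ lam hlam hp, pow_one]
    ring
  apply isIntegral_inv_of_mem_adjoin hlam
  rw [hinv, one_sub_pow_mul_eq_of_hasSum hs fun i hi ↦ congrArg (algebraMap A K) (hper i hi)]
  exact add_mem (sub_mem (hpart _) (mul_mem (hpow p) (hpart k))) (hpow _)

lemma tsum_pow_mul_ne_inv (hlam : lam ≠ 0) (hint : ¬ IsIntegral A lam⁻¹)
    (hb : EventuallyPeriodic b) : ∑' i, lam ^ i * algebraMap A K (b i) ≠ lam⁻¹ := by
  intro hsum
  have hs : Summable fun i ↦ lam ^ i * algebraMap A K (b i) :=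
    by_contra fun h ↦ inv_ne_zero hlam (hsum ▸ tsum_eq_zero_of_not_summable h)
  exact hint (isIntegral_inv_of_hasSum hlam hb (hsum ▸ hs.hasSum))

lemma not_isIntegral_inv_two_thirds : ¬ IsIntegral ℤ (2 / 3 : ℝ)⁻¹ := by
  intro h
  obtain ⟨m, hm⟩ := h.exists_int_iff_exists_rat.mp ⟨3 / 2, by norm_num⟩
  have h3 : 3 = 2 * m := by
    rify
    linarith
  lia

end Integrality

namespace EdgeGame

variable {V E : Type} {G : EdgeGame V E}

lemma DS_eq_add_mul [Finite E] (G : EdgeGame V E) {lam : ℝ} (hlam : |lam| < 1) (ρ : ℕ → E) :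
    G.DS lam ρ = G.w (ρ 0) + lam * ∑' i, lam ^ i * (G.w (ρ (i + 1)) : ℝ) := by
  obtain ⟨C, hC⟩ := (Set.finite_range fun e ↦ ‖(G.w e : ℝ)‖).bddAbove
  have hsum : Summable fun i ↦ lam ^ i * (G.w (ρ i) : ℝ) :=
    summable_pow_mul_of_norm_le hlam fun i ↦ hC ⟨ρ i, rfl⟩
  rw [DS, hsum.tsum_eq_zero_add, ← tsum_mul_left]
  simp only [pow_zero, one_mul, pow_succ', mul_assoc]

/-- The vertex reached after the finite play `l`. -/
def endVertex (G : EdgeGame V E) (l : List E) : V := (l.getLast?.map G.tgt).getD G.init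

@[simp]
lemma endVertex_nil : G.endVertex [] = G.init := rfl

@[simp]
lemma endVertex_concat (l : List E) (e : E) : G.endVertex (l ++ [e]) = G.tgt e := by
  simp [endVertex]

@[simp]
lemma endVertex_prefixList (ρ : ℕ → E) (i : ℕ) : G.endVertex (prefixList ρ i) = G.tgt (ρ i) := by
  rw [prefixList, List.ofFn_succ_last, endVertex_concat, Fin.val_last]

@[simp]
lemma length_prefixList (ρ : ℕ → E) (i : ℕ) : (prefixList ρ i).length = i + 1 :=
  List.length_ofFn

theorem eveWins_of_isPlay (hG : G.Eve = Set.univ) {Win : (ℕ → E) → Prop} {ρ : ℕ → E}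
    (hρ : G.IsPlay ρ) (hwin : Win ρ) : G.EveWins Win := by
  classical
  choose out hout using G.succ
  -- Follow `ρ`, leaving it only after prefixes that `ρ` does not extend.
  let σ (l : List E) : E :=
    if G.src (ρ l.length) = G.endVertex l then ρ l.length else out (G.endVertex l)
  have hσ (l : List E) : G.src (σ l) = G.endVertex l := by
    dsimp only [σ]
    split_ifs with h
    exacts [h, hout _]
  refine ⟨σ, ⟨fun _ ↦ hσ [], fun l e _ ↦ by simp [hσ]⟩, fun ρ' _ hcons ↦ ?_⟩
  suffices hρ' : ρ' = ρ from hρ' ▸ hwin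
  funext i
  induction i with
  | zero => simp [hcons.1 (by simp [hG]), σ, hρ.1]
  | succ i ih =>
    rw [hcons.2 i (by simp [hG])]
    simp [σ, ih, hρ.2]

section FiniteMemory

variable {M : Type} (G : EdgeGame V E) (δ : M → E → M) (f : M → V → E) (m₀ : M)

/-- One round of a finite-state machine with update function `δ` and output function `f`, acting
on pairs (memory state before the last edge, last edge). -/
def machineStep (c : M × E) : M × E := (δ c.1 c.2, f (δ c.1 c.2) (G.tgt c.2))

/-- The play generated by the finite-state machine `(δ, f)` started in the state `m₀`. -/
def machinePlay (i : ℕ) : E := ((G.machineStep δ f)^[i] (m₀, f m₀ G.init)).2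

lemma memRun_machinePlay (i : ℕ) :
    memRun δ m₀ (G.machinePlay δ f m₀) i = ((G.machineStep δ f)^[i] (m₀, f m₀ G.init)).1 := by
  induction i with
  | zero => rfl
  | succ i ih => rw [memRun, ih, Function.iterate_succ_apply']; rfl

lemma machinePlay_succ (i : ℕ) :
    G.machinePlay δ f m₀ (i + 1) =
      f (memRun δ m₀ (G.machinePlay δ f m₀) (i + 1)) (G.tgt (G.machinePlay δ f m₀ i)) := by
  rw [memRun, memRun_machinePlay, machinePlay, Function.iterate_succ_apply']
  rfl

lemma isPlay_machinePlay {f : M → V → E} (hf : ∀ m v, G.src (f m v) = v) :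
    G.IsPlay (G.machinePlay δ f m₀) :=
  ⟨hf _ _, fun i ↦ by rw [machinePlay_succ, hf]⟩

lemma eventuallyPeriodic_machinePlay [Finite M] [Finite E] :
    EventuallyPeriodic (G.machinePlay δ f m₀) :=
  (EventuallyPeriodic.iterate _ _).comp Prod.snd

end FiniteMemory

theorem EveWinsFM.exists_eventuallyPeriodic [Finite E] {Win : (ℕ → E) → Prop}
    (h : G.EveWinsFM Win) : ∃ ρ, G.IsPlay ρ ∧ EventuallyPeriodic ρ ∧ Win ρ := by
  classical
  obtain ⟨M, _, m₀, δ, o, ho, hwin⟩ := h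
  choose out hout using G.succ
  let f (m : M) (v : V) : E := if v ∈ G.Eve then o m v else out v
  have hf (m : M) (v : V) : G.src (f m v) = v := by
    dsimp only [f]
    split_ifs with hv
    exacts [ho m v hv, hout v]
  have hplay := G.isPlay_machinePlay δ m₀ hf
  refine ⟨_, hplay, G.eventuallyPeriodic_machinePlay δ f m₀, hwin _ hplay ⟨?_, fun i hi ↦ ?_⟩⟩
  · exact fun hinit ↦ if_pos hinit
  · rw [machinePlay_succ]
    exact if_pos hi

end EdgeGame

namespace G15

/-- The 0-1 sequence of Eve's choices at vertex `1` along a play: digit `1` for the self-loop of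
weight `1`, digit `0` for the one of weight `0`. -/
def digits (ρ : ℕ → Fin 3) (i : ℕ) : ℕ := if ρ (i + 1) = 1 then 1 else 0

/-- The play that spells the 0-1 sequence `b`. -/
def playOfDigits (b : ℕ → ℕ) : ℕ → Fin 3
  | 0 => 0
  | i + 1 => if b i = 1 then 1 else 2

lemma isPlay_playOfDigits (b : ℕ → ℕ) : G15.IsPlay (playOfDigits b) := by
  refine ⟨rfl, fun i ↦ ?_⟩
  by_cases h : b i = 1 <;> simp [G15, playOfDigits, h]

lemma digits_playOfDigits {b : ℕ → ℕ} (hb : ∀ i, b i ≤ 1) : digits (playOfDigits b) = b := by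
  funext i
  have := hb i
  by_cases h : b i = 1 <;> simp [digits, playOfDigits, h]
  lia

lemma src_eq_zero_iff {e : Fin 3} : G15.src e = 0 ↔ e = 0 := by
  simp [G15]

lemma w_succ_eq_digits {ρ : ℕ → Fin 3} (hρ : G15.IsPlay ρ) (i : ℕ) :
    G15.w (ρ (i + 1)) = digits ρ i := by
  have hne : ρ (i + 1) ≠ 0 := by
    rw [ne_eq, ← src_eq_zero_iff, hρ.2 i]
    exact one_ne_zero
  simp [G15, digits, hne]

lemma DS_eq_zero_iff {lam : ℝ} (hlam₀ : lam ≠ 0) (hlam : |lam| < 1) {ρ : ℕ → Fin 3}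
    (hρ : G15.IsPlay ρ) : G15.DS lam ρ = 0 ↔ ∑' i, lam ^ i * (digits ρ i : ℝ) = lam⁻¹ := by
  have hw₀ : G15.w (ρ 0) = -1 := by
    rw [src_eq_zero_iff.mp hρ.1]
    rfl
  rw [G15.DS_eq_add_mul hlam, hw₀, ← mul_eq_one_iff_eq_inv₀ hlam₀]
  simp only [w_succ_eq_digits hρ, Rat.cast_neg, Rat.cast_one, Rat.cast_natCast]
  rw [neg_add_eq_zero, eq_comm, mul_comm]

end G15

theorem stmt15_general {lam : ℝ} (hlam : lam ∈ Set.Ico (1 / 2) 1)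
    (hint : ¬ IsIntegral ℤ lam⁻¹) :
    (∃ b : ℕ → ℕ, (∀ i, b i ≤ 1) ∧ ∑' i, lam ^ i * (b i : ℝ) = lam⁻¹) ∧
    (∀ b : ℕ → ℕ, EventuallyPeriodic b → ∑' i, lam ^ i * (b i : ℝ) ≠ lam⁻¹) ∧
    G15.EveWins (fun ρ ↦ G15.DS lam ρ = 0) ∧
    ¬ G15.EveWinsFM (fun ρ ↦ G15.DS lam ρ = 0) := by
  have hpos : 0 < lam := by linarith [hlam.1]
  have habs : |lam| < 1 := by rw [abs_of_pos hpos]; exact hlam.2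
  have hnotper (b : ℕ → ℕ) (hb : EventuallyPeriodic b) :
      ∑' i, lam ^ i * (b i : ℝ) ≠ lam⁻¹ := by
    simpa using tsum_pow_mul_ne_inv hpos.ne' hint (hb.comp ((↑) : ℕ → ℤ))
  obtain ⟨b, hb, hsum⟩ := exists_hasSum_pow_mul_eq_inv hlam
  refine ⟨⟨b, hb, hsum.tsum_eq⟩, hnotper, ?_, fun hFM ↦ ?_⟩
  · have hplay := G15.isPlay_playOfDigits b
    refine EdgeGame.eveWins_of_isPlay rfl hplay ?_
    rw [G15.DS_eq_zero_iff hpos.ne' habs hplay, G15.digits_playOfDigits hb, hsum.tsum_eq]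
  · obtain ⟨ρ, hplay, hper, hDS⟩ := hFM.exists_eventuallyPeriodic
    exact hnotper (G15.digits ρ) ((hper.comp_add_right 1).comp fun e ↦ if e = 1 then 1 else 0)
      ((G15.DS_eq_zero_iff hpos.ne' habs hplay).mp hDS)

/-- There is a 0-1 sequence `b` with `Σ (2/3)^i · b i = 3/2`, but
no eventually periodic 0-1 sequence has this property. Consequently, in the
one-player exact-value discounted sum game of Figure 5 (discount factor `λ = 2/3`),
Eve has a strategy achieving discounted sum exactly `0`, but no finite-memory
strategy achieves it. -/
theorem stmt15 :
    (∃ b : ℕ → ℕ, (∀ i, b i ≤ 1) ∧ (∑' i : ℕ, (2 / 3 : ℝ) ^ i * b i) = 3 / 2) ∧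
    (∀ b : ℕ → ℕ, (∀ i, b i ≤ 1) →
      (∃ k p : ℕ, 0 < p ∧ ∀ i, k ≤ i → b (i + p) = b i) →
      (∑' i : ℕ, (2 / 3 : ℝ) ^ i * b i) ≠ 3 / 2) ∧
    G15.EveWins (fun ρ => G15.DS (2 / 3 : ℝ) ρ = 0) ∧
    ¬ G15.EveWinsFM (fun ρ => G15.DS (2 / 3 : ℝ) ρ = 0) := by
  obtain ⟨hex, hper, hgame⟩ :=
    inv_div (2 : ℝ) 3 ▸ stmt15_general (by norm_num) not_isIntegral_inv_two_thirds
  exact ⟨hex, fun b _ ↦ hper b, hgame⟩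
end
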